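/- arXiv:2309.15706 — 4 statements merged into one kernel-verified Lean document; each statement's English description precedes it below -/
import Mathlib

section
/- Poisson bracket estimate: Let j₀, N ∈ ℕ, r > 2 and 0 < σ < r/2. Let W be a formal Hamiltonian with W(n) = 0 whenever supp n ⊄ A(j₀,N), and let U be a formal Hamiltonian with ‖U‖_{j₀,N,r} < ∞ and ‖W‖_{j₀,N,r} < ∞. Then all the series defining the coefficients of {W,U} converge absolutely and ‖{W,U}‖_{j₀,N,r−σ} ≤ (1/σ)·‖W‖_{j₀,N,r}·‖U‖_{j₀,N,r}. -/
/-!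
The coefficient of `{W, U}` at `l` collects the triples `(k, n, m)` with `l = n + m - e_k` in both
components, weighted by `n_k m'_k - n'_k m_k`. When that weight is nonzero, `k` lies in the supports
of both `n` and `m`, so that

* `|l|₁ = |n|₁ + |m|₁ - 2` (`deg_bracket`) and `Δ(l) ≤ Δ(n) + Δ(m)` (`diam_bracket`);
* if `W(n) ≠ 0`, then `k` is in the barrier, hence both `n` and `m` meet the barrier.

With `a = |l|₁` and `x = Δ(n) + Δ(m) + a`, Bernoulli's inequality for `(1 + σ/(r-σ))^x` gives
`σ a (r-σ)^(Δ(l)+a-1) ≤ r^x` (`weight_real`), and `r^x` is exactly the product of the weights of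
`n` and `m` in the norms of `W` and `U`. Finally `Σ_k |n_k m'_k - n'_k m_k| ≤ |n|₁ |m|₁`
(`tsum_coef_le`) supplies the degree factors. All rearrangements of sums are made in `ℝ≥0∞`.
Absolute convergence follows from the same count over `k`, because `r > 1` makes the weights of
monomials of positive degree at least `1`.
-/


open Classical MeasureTheory
open scoped BigOperators ENNReal NNReal

noncomputable section

namespace QPNLS

abbrev Lat (d : ℕ) := Fin d → ℤ

def jnorm {d : ℕ} (j : Lat d) : ℝ := Real.sqrt (∑ i, ((j i : ℝ))^2)

abbrev Mono (d : ℕ) := (Lat d →₀ ℕ) × (Lat d →₀ ℕ)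

abbrev FormalHam (d : ℕ) := Mono d → ℂ

def msupp {d : ℕ} (n : Mono d) : Finset (Lat d) := n.1.support ∪ n.2.support

def diam {d : ℕ} (n : Mono d) : ℝ :=
  (((msupp n ×ˢ msupp n).sup fun p => (jnorm (p.1 - p.2)).toNNReal) : ℝ≥0)

def deg {d : ℕ} (n : Mono d) : ℕ := (∑ j ∈ n.1.support, n.1 j) + (∑ j ∈ n.2.support, n.2 j)

def inBarrier {d : ℕ} (j₀ N : ℝ) (n : Mono d) : Prop :=
  ∃ j ∈ msupp n, |jnorm j - j₀| ≤ N

def suppInBarrier {d : ℕ} (j₀ N : ℝ) (n : Mono d) : Prop :=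
  ∀ j ∈ msupp n, |jnorm j - j₀| ≤ N

def hnorm {d : ℕ} (j₀ N r : ℝ) (W : FormalHam d) : ℝ≥0∞ :=
  ∑' n : Mono d, if inBarrier j₀ N n then
    (‖W n‖₊ : ℝ≥0∞) * (deg n : ℝ≥0∞) * ENNReal.ofReal (r ^ (diam n + (deg n : ℝ) - 1)) else 0

def bracketTerm {d : ℕ} (W U : FormalHam d) (l : Mono d) (p : Lat d × Mono d × Mono d) : ℂ :=
  if (∀ j : Lat d, (p.2.1.1 j : ℤ) + (p.2.2.1 j : ℤ) - (if j = p.1 then 1 else 0) = (l.1 j : ℤ))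
     ∧ (∀ j : Lat d, (p.2.1.2 j : ℤ) + (p.2.2.2 j : ℤ) - (if j = p.1 then 1 else 0) = (l.2 j : ℤ))
  then W p.2.1 * U p.2.2 *
    (((p.2.1.1 p.1 * p.2.2.2 p.1 : ℤ) - (p.2.1.2 p.1 * p.2.2.1 p.1 : ℤ) : ℤ) : ℂ)
  else 0

def bracket {d : ℕ} (W U : FormalHam d) : FormalHam d :=
  fun l => Complex.I * ∑' p : Lat d × Mono d × Mono d, bracketTerm W U l p

def BracketAbsConv {d : ℕ} (W U : FormalHam d) : Prop :=
  ∀ l : Mono d, Summable (fun p : Lat d × Mono d × Mono d => ‖bracketTerm W U l p‖)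

def adIter {d : ℕ} (W U : FormalHam d) : ℕ → FormalHam d
  | 0 => U
  | (i+1) => bracket (adIter W U i) W

def lieTransform {d : ℕ} (W U : FormalHam d) : FormalHam d :=
  fun l => ∑' i : ℕ, ((Nat.factorial i : ℂ))⁻¹ * adIter W U i l

def LieAbsConv {d : ℕ} (W U : FormalHam d) : Prop :=
  (∀ i : ℕ, BracketAbsConv (adIter W U i) W) ∧
  ∀ l : Mono d, Summable (fun i : ℕ => ((Nat.factorial i : ℝ))⁻¹ * ‖adIter W U i l‖)

def IsResonant {d : ℕ} (n : Mono d) : Prop := n.1 = n.2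

def freqSum {d : ℕ} (V : Lat d → ℝ) (n : Mono d) : ℝ :=
  ∑ j ∈ msupp n, ((n.1 j : ℝ) - (n.2 j : ℝ)) * V j

def slicedNorm {d : ℕ} (j₀ N r : ℝ) (A : ℕ) (Z R : FormalHam d) : ℝ≥0∞ :=
  ∑' n : Mono d, if diam n + (deg n : ℝ) = (A : ℝ) ∧ inBarrier j₀ N n then
    ((‖Z n‖₊ + ‖R n‖₊ : ℝ≥0) : ℝ≥0∞) * (deg n : ℝ≥0∞) *
      ENNReal.ofReal (r ^ (diam n + (deg n : ℝ) - 1)) else 0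

def pot {d : ℕ} (Γ : Finset (Lat d)) (v : Lat d → ℝ) (θ α : Fin d → ℝ) (j : Lat d) : ℝ :=
  ∑ ℓ ∈ Γ, v ℓ * Real.cos (2 * Real.pi * ∑ i, (ℓ i : ℝ) * (θ i + (j i : ℝ) * α i))

def diamZ {d : ℕ} (k : Lat d →₀ ℤ) : ℝ :=
  (((k.support ×ˢ k.support).sup fun p => (jnorm (p.1 - p.2)).toNNReal) : ℝ≥0)

def norm1Z {d : ℕ} (k : Lat d →₀ ℤ) : ℕ := ∑ j ∈ k.support, (k j).natAbs

def Nonresonant {d : ℕ} (ω : Lat d → ℝ) (γ : ℝ) (L M j₀ : ℕ) : Prop :=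
  ∀ k : Lat d →₀ ℤ, k ≠ 0 →
    (∃ j ∈ k.support, |jnorm j - (j₀ : ℝ)| ≤ (M : ℝ)^2) →
    diamZ k + (norm1Z k : ℝ) ≤ (M : ℝ) + 2 →
    (γ / (2 * (L : ℝ) * (M : ℝ)^2 * (j₀ : ℝ)) ^ (2 * (d + 1))) ^ (10 * L^4 * M^4) ≤
      |∑ j ∈ k.support, (k j : ℝ) * ω j|

def Dham {d : ℕ} (V : Lat d → ℝ) : FormalHam d :=
  fun n => if h : ∃ j : Lat d, n = (Finsupp.single j 1, Finsupp.single j 1)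
    then ((V h.choose / 2 : ℝ) : ℂ) else 0

def Z1ham {d : ℕ} (ε₂ : ℝ) : FormalHam d :=
  fun n => if ∃ j : Lat d, n = (Finsupp.single j 2, Finsupp.single j 2)
    then ((ε₂ / 4 : ℝ) : ℂ) else 0

def R1ham {d : ℕ} (ε₁ : ℝ) : FormalHam d :=
  fun n => if ∃ i j : Lat d, (∑ a, ((i - j) a).natAbs) = 1 ∧
      n = (Finsupp.single i 1, Finsupp.single j 1)
    then ((ε₁ / 2 : ℝ) : ℂ) else 0

def H1 {d : ℕ} (V : Lat d → ℝ) (ε₁ ε₂ : ℝ) : FormalHam d :=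
  fun n => Dham V n + Z1ham ε₂ n + R1ham ε₁ n

def Hseq {d : ℕ} (H : FormalHam d) (F : ℕ → FormalHam d) : ℕ → FormalHam d
  | 0 => H
  | (i+1) => lieTransform (F i) (Hseq H F i)

end QPNLS

namespace QPNLS

/-! ### Degree, diameter and support -/

lemma jnorm_eq {d : ℕ} (j : Lat d) :
    jnorm j = ‖(WithLp.toLp 2 (fun i => (j i : ℝ)) : EuclideanSpace ℝ (Fin d))‖ := by
  simp [jnorm, EuclideanSpace.norm_eq]

lemma jnorm_triangle {d : ℕ} (x k y : Lat d) :
    jnorm (x - y) ≤ jnorm (x - k) + jnorm (k - y) := by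
  simp only [jnorm_eq]
  refine le_trans (le_of_eq ?_) (norm_add_le _ _)
  congr 1
  ext i
  simp

lemma diam_nonneg {d : ℕ} (n : Mono d) : 0 ≤ diam n := NNReal.coe_nonneg _

lemma le_diam {d : ℕ} {n : Mono d} {x y : Lat d} (hx : x ∈ msupp n) (hy : y ∈ msupp n) :
    jnorm (x - y) ≤ diam n := by
  have hxy : (x, y) ∈ msupp n ×ˢ msupp n := Finset.mk_mem_product hx hy
  have h := Finset.le_sup (f := fun p : Lat d × Lat d => (jnorm (p.1 - p.2)).toNNReal) hxy
  exact Real.toNNReal_le_iff_le_coe.mp h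

lemma diam_le {d : ℕ} {n : Mono d} {c : ℝ} (hc : 0 ≤ c)
    (h : ∀ x ∈ msupp n, ∀ y ∈ msupp n, jnorm (x - y) ≤ c) : diam n ≤ c := by
  lift c to ℝ≥0 using hc
  refine NNReal.coe_le_coe.mpr (Finset.sup_le fun p hp => ?_)
  rw [Finset.mem_product] at hp
  exact Real.toNNReal_le_iff_le_coe.mpr (h _ hp.1 _ hp.2)

lemma mem_msupp {d : ℕ} {n : Mono d} {j : Lat d} : j ∈ msupp n ↔ n.1 j ≠ 0 ∨ n.2 j ≠ 0 := by
  simp [msupp]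

lemma deg_eq {d : ℕ} (n : Mono d) : deg n = n.1.degree + n.2.degree := rfl

lemma deg_eq_sum {d : ℕ} (n : Mono d) : deg n = ∑ j ∈ msupp n, (n.1 j + n.2 j) := by
  rw [deg, Finset.sum_add_distrib]
  congr 1
  · exact Finset.sum_subset Finset.subset_union_left (by simp)
  · exact Finset.sum_subset Finset.subset_union_right (by simp)

lemma le_deg {d : ℕ} (n : Mono d) (k : Lat d) : n.1 k + n.2 k ≤ deg n := by
  by_cases hk : k ∈ msupp n
  · rw [deg_eq_sum]
    exact Finset.single_le_sum (f := fun j => n.1 j + n.2 j) (fun _ _ => Nat.zero_le _) hk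
  · rw [mem_msupp] at hk
    omega

lemma deg_pos {d : ℕ} {n : Mono d} {k : Lat d} (hk : k ∈ msupp n) : 1 ≤ deg n := by
  have := le_deg n k
  rw [mem_msupp] at hk
  omega

/-! ### The combinatorics of a single bracket term -/

/-- The relation `l = n + m - e_k` in both components, for `p = (k, n, m)`. -/
def Rel {d : ℕ} (l : Mono d) (p : Lat d × Mono d × Mono d) : Prop :=
  (∀ j : Lat d, (p.2.1.1 j : ℤ) + (p.2.2.1 j : ℤ) - (if j = p.1 then 1 else 0) = (l.1 j : ℤ))
    ∧ (∀ j : Lat d, (p.2.1.2 j : ℤ) + (p.2.2.2 j : ℤ) - (if j = p.1 then 1 else 0) = (l.2 j : ℤ))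

/-- The absolute value of the integer factor `n_k m'_k - n'_k m_k`. -/
def coef {d : ℕ} (k : Lat d) (n m : Mono d) : ℕ :=
  ((n.1 k * m.2 k : ℤ) - (n.2 k * m.1 k : ℤ)).natAbs

lemma enorm_bracketTerm {d : ℕ} (W U : FormalHam d) (l : Mono d) (p : Lat d × Mono d × Mono d) :
    ‖bracketTerm W U l p‖ₑ =
      if Rel l p then ‖W p.2.1‖ₑ * ‖U p.2.2‖ₑ * (coef p.1 p.2.1 p.2.2 : ℝ≥0∞) else 0 := by
  have hint : ∀ z : ℤ, ‖(z : ℂ)‖ₑ = (z.natAbs : ℝ≥0∞) := by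
    intro z
    rw [← ofReal_norm, Complex.norm_intCast, ← Int.cast_abs, ← Nat.cast_natAbs, ENNReal.ofReal_natCast]
  unfold bracketTerm
  by_cases h : Rel l p
  · rw [if_pos h]
    unfold Rel at h
    rw [if_pos h, enorm_mul, enorm_mul, hint]
    rfl
  · rw [if_neg h]
    unfold Rel at h
    rw [if_neg h, enorm_zero]

lemma Rel.unique {d : ℕ} {l l' : Mono d} {p : Lat d × Mono d × Mono d} (h : Rel l p)
    (h' : Rel l' p) : l = l' := by
  apply Prod.ext <;> ext j
  · have := h.1 j; have := h'.1 j; omega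
  · have := h.2 j; have := h'.2 j; omega

lemma coef_le {d : ℕ} (k : Lat d) (n m : Mono d) :
    coef k n m ≤ (n.1 k + n.2 k) * (m.1 k + m.2 k) := by
  have h1 : coef k n m ≤ n.1 k * m.2 k + n.2 k * m.1 k := by
    unfold coef
    refine (Int.natAbs_sub_le _ _).trans ?_
    simp [Int.natAbs_mul]
  nlinarith [Nat.zero_le (n.1 k * m.1 k), Nat.zero_le (n.2 k * m.2 k)]

lemma mem_left_of_coef {d : ℕ} {k : Lat d} {n m : Mono d} (h : coef k n m ≠ 0) : k ∈ msupp n := by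
  rw [mem_msupp]
  by_contra! hc
  exact h (by simp [coef, hc.1, hc.2])

lemma mem_right_of_coef {d : ℕ} {k : Lat d} {n m : Mono d} (h : coef k n m ≠ 0) : k ∈ msupp m := by
  rw [mem_msupp]
  by_contra! hc
  exact h (by simp [coef, hc.1, hc.2])

lemma deg_bracket {d : ℕ} {l n m : Mono d} {k : Lat d} (h : Rel l (k, n, m)) :
    deg l + 2 = deg n + deg m := by
  have h1 : l.1 + Finsupp.single k 1 = n.1 + m.1 := by
    ext j
    have := h.1 j
    simp only [Finsupp.add_apply, Finsupp.single_apply, eq_comm (a := k)]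
    split_ifs at this ⊢ <;> simp_all <;> omega
  have h2 : l.2 + Finsupp.single k 1 = n.2 + m.2 := by
    ext j
    have := h.2 j
    simp only [Finsupp.add_apply, Finsupp.single_apply, eq_comm (a := k)]
    split_ifs at this ⊢ <;> simp_all <;> omega
  have e1 := congrArg Finsupp.degree h1
  have e2 := congrArg Finsupp.degree h2
  simp only [map_add, Finsupp.degree_single] at e1 e2
  simp only [deg_eq]
  omega

lemma diam_bracket {d : ℕ} {l n m : Mono d} {k : Lat d} (h : Rel l (k, n, m))
    (hn : k ∈ msupp n) (hm : k ∈ msupp m) : diam l ≤ diam n + diam m := by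
  have hsub : ∀ x ∈ msupp l, x ∈ msupp n ∨ x ∈ msupp m := by
    intro x hx
    have h1 := h.1 x
    have h2 := h.2 x
    simp only [mem_msupp] at hx h1 h2 ⊢
    split_ifs at h1 h2 <;> omega
  have dn := diam_nonneg n
  have dm := diam_nonneg m
  refine diam_le (by positivity) fun x hx y hy => ?_
  rcases hsub x hx with hx | hx <;> rcases hsub y hy with hy | hy
  · linarith [le_diam hx hy]
  · linarith [le_diam hx hn, le_diam hm hy, jnorm_triangle x k y]
  · linarith [le_diam hx hm, le_diam hn hy, jnorm_triangle x k y]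
  · linarith [le_diam hx hy]

lemma tsum_coef_le {d : ℕ} (n m : Mono d) :
    ∑' k : Lat d, (coef k n m : ℝ≥0∞) ≤ (deg n : ℝ≥0∞) * (deg m : ℝ≥0∞) := by
  rw [tsum_eq_sum (s := msupp n)]
  · have h : ∑ k ∈ msupp n, coef k n m ≤ deg n * deg m := by
      rw [deg_eq_sum n, Finset.sum_mul]
      exact Finset.sum_le_sum fun k _ =>
        (coef_le k n m).trans (Nat.mul_le_mul_left _ (le_deg m k))
    exact_mod_cast h
  · intro k hk
    by_contra hc
    exact hk (mem_left_of_coef (by simpa using hc))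

/-! ### Weights -/

/-- The factor `r^(Δ(n)+|n|₁-1)` of the norm. -/
def wt {d : ℕ} (r : ℝ) (n : Mono d) : ℝ≥0∞ := ENNReal.ofReal (r ^ (diam n + (deg n : ℝ) - 1))

/-- The loss of `σ` in the radius absorbs one factor `a`: with `x = y + a ≥ 1`, Bernoulli gives
`r^x ≥ (r-σ)^x (1 + xσ/(r-σ)) ≥ xσ (r-σ)^(x-1)`. -/
lemma weight_real {r σ D y : ℝ} {a : ℕ} (hr : 2 < r) (hσ : 0 < σ) (hσr : σ < r / 2)
    (hD : D ≤ y) (hy : 0 ≤ y) :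
    σ * ((a : ℝ) * (r - σ) ^ (D + a - 1)) ≤ r ^ (y + a) := by
  have hs : 1 < r - σ := by linarith
  have hs0 : 0 < r - σ := by linarith
  rcases Nat.eq_zero_or_pos a with rfl | ha
  · simp only [Nat.cast_zero, zero_mul, mul_zero]
    positivity
  have ha1 : (1 : ℝ) ≤ a := by exact_mod_cast ha
  have hB : 1 + (y + a) * (σ / (r - σ)) ≤ (1 + σ / (r - σ)) ^ (y + a) :=
    one_add_mul_self_le_rpow_one_add (by have : 0 < σ / (r - σ) := by positivity
                                         linarith) (by linarith)
  have hmul : (r - σ) ^ (y + a) * (1 + σ / (r - σ)) ^ (y + a) = r ^ (y + a) := by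
    rw [← Real.mul_rpow hs0.le (by positivity)]
    congr 1
    field_simp
    ring
  have hmono : (r - σ) ^ (D + a - 1) ≤ (r - σ) ^ (y + a - 1) :=
    Real.rpow_le_rpow_of_exponent_le hs.le (by linarith)
  calc σ * ((a : ℝ) * (r - σ) ^ (D + a - 1))
      ≤ σ * ((y + a) * (r - σ) ^ (y + a - 1)) := by
        gcongr
        linarith
    _ = (r - σ) ^ (y + a) * ((y + a) * (σ / (r - σ))) := by
        rw [Real.rpow_sub_one hs0.ne']
        field_simp
    _ ≤ (r - σ) ^ (y + a) * (1 + σ / (r - σ)) ^ (y + a) := by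
        gcongr
        linarith
    _ = r ^ (y + a) := hmul

lemma weight_bracket {d : ℕ} {r σ : ℝ} (hr : 2 < r) (hσ : 0 < σ) (hσr : σ < r / 2)
    {l n m : Mono d} {k : Lat d} (h : Rel l (k, n, m)) (hn : k ∈ msupp n) (hm : k ∈ msupp m) :
    (deg l : ℝ≥0∞) * wt (r - σ) l ≤ (ENNReal.ofReal σ)⁻¹ * (wt r n * wt r m) := by
  have hσ0 : ENNReal.ofReal σ ≠ 0 := by simpa using hσ
  rw [mul_comm _⁻¹, ← div_eq_mul_inv, ENNReal.le_div_iff_mul_le (Or.inl hσ0) (Or.inl ENNReal.ofReal_ne_top)]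
  have hr0 : 0 < r := by linarith
  have hd : (deg l : ℝ) + 2 = deg n + deg m := by exact_mod_cast deg_bracket h
  have hreal := weight_real (a := deg l) hr hσ hσr (diam_bracket h hn hm)
    (add_nonneg (diam_nonneg n) (diam_nonneg m))
  have hexp : r ^ (diam n + diam m + deg l) =
      r ^ (diam n + (deg n : ℝ) - 1) * r ^ (diam m + (deg m : ℝ) - 1) := by
    rw [← Real.rpow_add hr0]
    congr 1
    linarith
  rw [hexp] at hreal
  unfold wt
  rw [← ENNReal.ofReal_mul (by positivity), ← ENNReal.ofReal_natCast,
    ← ENNReal.ofReal_mul (by positivity), mul_comm, ← ENNReal.ofReal_mul hσ.le]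
  exact ENNReal.ofReal_le_ofReal hreal

lemma one_le_wt {d : ℕ} {r : ℝ} (hr : 2 < r) {n : Mono d} {k : Lat d} (hk : k ∈ msupp n) :
    1 ≤ wt r n := by
  have h1 : (1 : ℝ) ≤ deg n := by exact_mod_cast deg_pos hk
  rw [wt, ENNReal.one_le_ofReal]
  exact Real.one_le_rpow (by linarith) (by linarith [diam_nonneg n])

/-! ### The estimate -/

/-- The summand of `hnorm` without its degree factor. -/
def term {d : ℕ} (j₀ N r : ℝ) (W : FormalHam d) (n : Mono d) : ℝ≥0∞ :=
  if inBarrier j₀ N n then ‖W n‖ₑ * wt r n else 0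

lemma hnorm_eq {d : ℕ} (j₀ N r : ℝ) (W : FormalHam d) :
    hnorm j₀ N r W = ∑' n, term j₀ N r W n * (deg n : ℝ≥0∞) := by
  unfold hnorm term wt
  refine tsum_congr fun n => ?_
  split_ifs
  · rw [mul_right_comm]
    rfl
  · simp

/-- Summing a product bound over all triples `(k, n, m)` produces the product of the norms. -/
lemma tsum_triple_le {d : ℕ} (j₀ N r : ℝ) (W U : FormalHam d) :
    ∑' p : Lat d × Mono d × Mono d,
      term j₀ N r W p.2.1 * term j₀ N r U p.2.2 * (coef p.1 p.2.1 p.2.2 : ℝ≥0∞)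
      ≤ hnorm j₀ N r W * hnorm j₀ N r U := by
  rw [ENNReal.tsum_prod', ENNReal.tsum_comm, hnorm_eq, hnorm_eq, ← ENNReal.tsum_mul_right,
    ENNReal.tsum_prod']
  refine ENNReal.tsum_le_tsum fun n => ?_
  rw [← ENNReal.tsum_mul_left]
  refine ENNReal.tsum_le_tsum fun m => ?_
  simp only
  rw [ENNReal.tsum_mul_left]
  calc term j₀ N r W n * term j₀ N r U m * ∑' k, (coef k n m : ℝ≥0∞)
      ≤ term j₀ N r W n * term j₀ N r U m * ((deg n : ℝ≥0∞) * (deg m : ℝ≥0∞)) := by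
        gcongr
        exact tsum_coef_le n m
    _ = _ := by ring

/-- On the triples that contribute to the bracket both monomials meet the barrier, at `k`. -/
lemma terms_eq {d : ℕ} {j₀ N : ℝ} (r : ℝ) {W : FormalHam d} (U : FormalHam d) {n m : Mono d}
    {k : Lat d} (hW : ∀ n : Mono d, ¬ suppInBarrier j₀ N n → W n = 0) (hWn : W n ≠ 0)
    (hn : k ∈ msupp n) (hm : k ∈ msupp m) :
    term j₀ N r W n * term j₀ N r U m = ‖W n‖ₑ * ‖U m‖ₑ * (wt r n * wt r m) := by
  have hk : |jnorm k - j₀| ≤ N := by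
    by_contra hc
    exact hWn (hW n fun h => hc (h k hn))
  rw [term, term, if_pos ⟨k, hn, hk⟩, if_pos ⟨k, hm, hk⟩]
  ring

/-- Poisson bracket estimate. -/
theorem poisson_bracket_estimate {d : ℕ} (hd : 1 ≤ d) (j₀ N : ℕ) (r σ : ℝ)
    (hr : 2 < r) (hσ : 0 < σ) (hσr : σ < r / 2)
    (W U : FormalHam d)
    (hWsupp : ∀ n : Mono d, ¬ suppInBarrier (j₀ : ℝ) (N : ℝ) n → W n = 0)
    (hWfin : hnorm (j₀ : ℝ) (N : ℝ) r W < ⊤)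
    (hUfin : hnorm (j₀ : ℝ) (N : ℝ) r U < ⊤) :
    BracketAbsConv W U ∧
      hnorm (j₀ : ℝ) (N : ℝ) (r - σ) (bracket W U) ≤
        (ENNReal.ofReal σ)⁻¹ * hnorm (j₀ : ℝ) (N : ℝ) r W * hnorm (j₀ : ℝ) (N : ℝ) r U := by
  have hbound := tsum_triple_le (j₀ : ℝ) (N : ℝ) r W U
  constructor
  · intro l
    have hfin : ∑' p, ‖bracketTerm W U l p‖ₑ ≠ ⊤ := by
      refine ne_top_of_le_ne_top (ENNReal.mul_lt_top hWfin hUfin).ne (le_trans ?_ hbound)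
      refine ENNReal.tsum_le_tsum fun ⟨k, n, m⟩ => ?_
      rw [enorm_bracketTerm]
      by_cases hrel : Rel l (k, n, m)
      swap
      · simp [hrel]
      rw [if_pos hrel]
      by_cases hc : coef k n m = 0
      · simp [hc]
      by_cases hWn : W n = 0
      · simp [hWn]
      have hn := mem_left_of_coef hc
      have hm := mem_right_of_coef hc
      simp only
      rw [terms_eq r U hWsupp hWn hn hm]
      refine mul_le_mul_left ?_ _
      exact le_mul_of_one_le_right' (one_le_mul (one_le_wt hr hn) (one_le_wt hr hm))
    have hs : Summable fun p => ‖bracketTerm W U l p‖₊ := by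
      rw [← ENNReal.tsum_coe_ne_top_iff_summable]
      exact hfin
    exact NNReal.summable_coe.mpr hs
  · calc hnorm (j₀ : ℝ) (N : ℝ) (r - σ) (bracket W U)
        ≤ ∑' l : Mono d, ∑' p : Lat d × Mono d × Mono d,
            ‖bracketTerm W U l p‖ₑ * ((deg l : ℝ≥0∞) * wt (r - σ) l) := by
          rw [hnorm_eq]
          refine ENNReal.tsum_le_tsum fun l => ?_
          rw [ENNReal.tsum_mul_right]
          have hb : ‖bracket W U l‖ₑ ≤ ∑' p, ‖bracketTerm W U l p‖ₑ := by
            rw [bracket, enorm_mul]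
            have hI : ‖Complex.I‖ₑ = 1 := by rw [← ofReal_norm, Complex.norm_I, ENNReal.ofReal_one]
            rw [hI, one_mul]
            exact enorm_tsum_le_tsum_enorm
          unfold term
          split_ifs
          · calc ‖bracket W U l‖ₑ * wt (r - σ) l * (deg l : ℝ≥0∞)
                = ‖bracket W U l‖ₑ * ((deg l : ℝ≥0∞) * wt (r - σ) l) := by ring
              _ ≤ _ := by gcongr
          · simp
      _ = ∑' p : Lat d × Mono d × Mono d, ∑' l : Mono d,
            ‖bracketTerm W U l p‖ₑ * ((deg l : ℝ≥0∞) * wt (r - σ) l) := ENNReal.tsum_comm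
      _ ≤ ∑' p : Lat d × Mono d × Mono d, (ENNReal.ofReal σ)⁻¹ *
            (term j₀ N r W p.2.1 * term j₀ N r U p.2.2 * (coef p.1 p.2.1 p.2.2 : ℝ≥0∞)) := by
          refine ENNReal.tsum_le_tsum fun ⟨k, n, m⟩ => ?_
          by_cases hex : ∃ l, Rel l (k, n, m)
          swap
          · push Not at hex
            simp [enorm_bracketTerm, hex]
          obtain ⟨l, hrel⟩ := hex
          -- The triple determines `l`, so the sum over `l` has a single term.
          rw [tsum_eq_single l]
          swap
          · intro l' hl'
            have : ¬ Rel l' (k, n, m) := fun h => hl' (h.unique hrel)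
            simp [enorm_bracketTerm, this]
          rw [enorm_bracketTerm, if_pos hrel]
          by_cases hc : coef k n m = 0
          · simp [hc]
          by_cases hWn : W n = 0
          · simp [hWn]
          have hn := mem_left_of_coef hc
          have hm := mem_right_of_coef hc
          simp only
          rw [terms_eq r U hWsupp hWn hn hm]
          calc ‖W n‖ₑ * ‖U m‖ₑ * (coef k n m : ℝ≥0∞) * ((deg l : ℝ≥0∞) * wt (r - σ) l)
              ≤ ‖W n‖ₑ * ‖U m‖ₑ * (coef k n m : ℝ≥0∞) *
                  ((ENNReal.ofReal σ)⁻¹ * (wt r n * wt r m)) := by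
                exact mul_le_mul_right (weight_bracket hr hσ hσr hrel hn hm) _
            _ = _ := by ring
      _ ≤ (ENNReal.ofReal σ)⁻¹ * hnorm (j₀ : ℝ) (N : ℝ) r W * hnorm (j₀ : ℝ) (N : ℝ) r U := by
          rw [ENNReal.tsum_mul_left, mul_assoc]
          gcongr

end QPNLS
end
end

section
/- Lower bound via the determinant (Benettin–Galgani–Giorgilli lemma): Let r ≥ 1 be an integer, M > 0, and let v^{(1)}, …, v^{(r)} ∈ ℝ^r be linearly independent vectors with ℓ¹-norm |v^{(l)}|₁ ≤ M for each 1 ≤ l ≤ r. Then for every w ∈ ℝ^r, max_{1≤l≤r} |w · v^{(l)}| ≥ r^{−3/2} · M^{1−r} · |w|₂ · |det V|, where V is the r×r matrix whose rows (equivalently, columns) are v^{(1)}, …, v^{(r)}, w·v is the Euclidean inner product, and |w|₂ the Euclidean norm. -/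
/-!
With `V` the matrix of rows `v l`, Cramer's rule `adj V * V = det V` gives
`det V * w i = ∑ l, (adj V) i l * (w · v l)`. An entry of the adjugate is the determinant of `V`
with one row replaced by a standard basis vector. Expanding the product of row sums shows that a
determinant is at most the product of the `ℓ¹`-norms of the rows (`abs_det_le_prod_row_sum`), so
each entry of the adjugate is at most `M ^ (r - 1)`. Hence `|det V| |w i| ≤ r M ^ (r - 1) m` with
`m = max |w · v l|`, and passing from the sup norm to the Euclidean norm of `w` costs a further
factor `√r`.
-/

/-- A determinant is bounded by the product of the `ℓ¹`-norms of its rows: the Leibniz terms are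
among the terms of the expanded product. -/
theorem abs_det_le_prod_row_sum {r : ℕ} (A : Matrix (Fin r) (Fin r) ℝ) :
    |A.det| ≤ ∏ i, ∑ j, |A i j| := by
  rw [← Matrix.det_transpose, Matrix.det_apply]
  calc |∑ σ : Equiv.Perm (Fin r), Equiv.Perm.sign σ • ∏ i, A.transpose (σ i) i|
      ≤ ∑ σ : Equiv.Perm (Fin r), ∏ i, |A i (σ i)| := by
        refine (Finset.abs_sum_le_sum_abs _ _).trans (Finset.sum_le_sum fun σ _ => ?_)
        rcases Int.units_eq_one_or (Equiv.Perm.sign σ) with h | h <;>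
          simp [h, Matrix.transpose_apply, Finset.abs_prod]
    _ = ∑ f ∈ (Finset.univ : Finset (Equiv.Perm (Fin r))).map
          ⟨fun σ : Equiv.Perm (Fin r) => (σ : Fin r → Fin r), DFunLike.coe_injective⟩, ∏ i, |A i (f i)| := by
        rw [Finset.sum_map]; rfl
    _ ≤ ∑ f : Fin r → Fin r, ∏ i, |A i (f i)| :=
        Finset.sum_le_sum_of_subset_of_nonneg (Finset.subset_univ _)
          fun _ _ _ => Finset.prod_nonneg fun _ _ => abs_nonneg _
    _ = ∏ i, ∑ j, |A i j| := by
        rw [Finset.prod_univ_sum, Fintype.piFinset_univ]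

theorem abs_adjugate_le {r : ℕ} {M : ℝ} (A : Matrix (Fin r) (Fin r) ℝ)
    (hA : ∀ l, ∑ i, |A l i| ≤ M) (i l : Fin r) :
    |A.adjugate i l| ≤ M ^ (r - 1) := by
  rw [Matrix.adjugate_apply]
  refine (abs_det_le_prod_row_sum _).trans ?_
  rw [← Finset.mul_prod_erase _ _ (Finset.mem_univ l)]
  have h1 : ∑ j, |(A.updateRow l (Pi.single i 1)) l j| = 1 := by
    simp [Matrix.updateRow_self, Pi.single_apply, apply_ite abs]
  rw [h1, one_mul]
  calc _ ≤ ∏ k ∈ Finset.univ.erase l, M := by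
        refine Finset.prod_le_prod
          (fun _ _ => Finset.sum_nonneg fun _ _ => abs_nonneg _) fun k hk => ?_
        rw [Matrix.updateRow_ne (Finset.ne_of_mem_erase hk)]
        exact hA k
    _ = M ^ (r - 1) := by
        rw [Finset.prod_const, Finset.card_erase_of_mem (Finset.mem_univ l)]
        simp

/-- Lower bound via the determinant (Benettin–Galgani–Giorgilli lemma). -/
theorem bgg_determinant_lower_bound (r : ℕ) (hr : 1 ≤ r) (M : ℝ) (hM : 0 < M)
    (v : Fin r → (Fin r → ℝ)) (hli : LinearIndependent ℝ v)
    (hbound : ∀ l : Fin r, ∑ i, |v l i| ≤ M) (w : Fin r → ℝ) :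
    ∃ l : Fin r,
      (r : ℝ) ^ (-(3/2 : ℝ)) * M ^ ((1 : ℝ) - (r : ℝ)) *
        Real.sqrt (∑ i, (w i)^2) * |(Matrix.of v).det| ≤ |∑ i, w i * v l i| := by
  have : Nonempty (Fin r) := ⟨⟨0, hr⟩⟩
  obtain ⟨l, hl⟩ := Finite.exists_max fun l : Fin r => |∑ i, w i * v l i|
  refine ⟨l, ?_⟩
  set m := |∑ i, w i * v l i| with hm
  have hm0 : 0 ≤ m := abs_nonneg _
  set V := Matrix.of v with hV
  have hr0 : (0 : ℝ) < r := by exact_mod_cast hr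
  have hK : 0 < M ^ (r - 1) := by positivity
  have hcramer (i : Fin r) : V.det * w i = ∑ k, V.adjugate i k * ∑ j, w j * v k j := by
    have h := congrFun (congrArg (fun B => B.mulVec w) (Matrix.adjugate_mul V)) i
    simp only [← Matrix.mulVec_mulVec, Matrix.smul_mulVec, Matrix.one_mulVec, Pi.smul_apply,
      smul_eq_mul] at h
    rw [← h]
    simp only [Matrix.mulVec, dotProduct, hV, Matrix.of_apply, mul_comm (w _)]
  have hentry (i : Fin r) : |V.det| * |w i| ≤ r * (M ^ (r - 1) * m) := by
    rw [← abs_mul, hcramer]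
    calc _ ≤ ∑ k : Fin r, |V.adjugate i k * ∑ j, w j * v k j| := Finset.abs_sum_le_sum_abs _ _
      _ ≤ ∑ _k : Fin r, M ^ (r - 1) * m := by
          refine Finset.sum_le_sum fun k _ => ?_
          rw [abs_mul]
          exact mul_le_mul (abs_adjugate_le V hbound i k) (hl k) (abs_nonneg _) hK.le
      _ = _ := by simp
  have hnorm : Real.sqrt (∑ i, (w i)^2) * |V.det| ≤ Real.sqrt r * (r * (M ^ (r - 1) * m)) := by
    have hB : 0 ≤ r * (M ^ (r - 1) * m) := by positivity
    rw [← Real.sqrt_sq (abs_nonneg V.det),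
      ← Real.sqrt_mul (Finset.sum_nonneg fun _ _ => sq_nonneg _)]
    rw [← Real.sqrt_sq hB]
    rw [← Real.sqrt_mul hr0.le]
    refine Real.sqrt_le_sqrt ?_
    rw [Finset.sum_mul]
    calc _ ≤ ∑ _i : Fin r, (r * (M ^ (r - 1) * m)) ^ 2 := by
          refine Finset.sum_le_sum fun i _ => ?_
          have := pow_le_pow_left₀ (by positivity) (hentry i) 2
          rwa [mul_pow, sq_abs (w i), mul_comm] at this
      _ = _ := by simp
  have hrpow : (r : ℝ) ^ (-(3/2 : ℝ)) * (Real.sqrt r * r) = 1 := by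
    rw [Real.sqrt_eq_rpow]
    nth_rewrite 3 [← Real.rpow_one (r : ℝ)]
    rw [← Real.rpow_add hr0, ← Real.rpow_add hr0]
    norm_num
  have hMpow : M ^ ((1 : ℝ) - (r : ℝ)) * M ^ (r - 1) = 1 := by
    rw [← Real.rpow_natCast M (r - 1), ← Real.rpow_add hM, Nat.cast_sub hr]
    simp
  calc _ = (r : ℝ) ^ (-(3/2 : ℝ)) * M ^ ((1 : ℝ) - (r : ℝ)) *
        (Real.sqrt (∑ i, (w i)^2) * |V.det|) := by ring
    _ ≤ (r : ℝ) ^ (-(3/2 : ℝ)) * M ^ ((1 : ℝ) - (r : ℝ)) *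
        (Real.sqrt r * (r * (M ^ (r - 1) * m))) :=
        mul_le_mul_of_nonneg_left hnorm (by positivity)
    _ = ((r : ℝ) ^ (-(3/2 : ℝ)) * (Real.sqrt r * r)) *
        (M ^ ((1 : ℝ) - (r : ℝ)) * M ^ (r - 1)) * m := by ring
    _ = m := by rw [hrpow, hMpow]; ring
end

section
/- Kleinbock–Margulis sublevel-set estimate in one variable: Let I ⊂ ℝ be an interval of finite positive length, let k ≥ 1 be an integer, and let f : I → ℝ be k times continuously differentiable with inf_{x∈I} |f^{(k)}(x)| ≥ A for some A > 0. Then for all γ > 0, the Lebesgue measure of {x ∈ I : |f(x)| ≤ γ} is at most ζ_k · (γ/A)^{1/k}, where ζ_k = k(k+1)·((k+1)!)^{1/k}. -/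
/-!
Write `E` for the sublevel set, which is compact. If `E` had measure larger than the claimed
bound `k * D`, where `D = (k + 1) * ((k + 1)! * γ / A) ^ (1 / k)`, then `E` would contain `k + 1`
points `x 0 < ⋯ < x k` with consecutive gaps at least `D` (`exists_separated_points`: repeatedly
take the minimum of `E` and discard an interval of length `D`).

The mean value theorem for divided differences (`exists_iteratedDerivWithin_eq_divided_difference`)
gives `ξ` with `f^{(k)}(ξ) = k! * ∑ i, f (x i) / ∏_{j ≠ i} (x i - x j)`. It follows by applying
the iterated Rolle theorem (`exists_iteratedDerivWithin_eq_zero`) to the difference of `f` and its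
Lagrange interpolant. Each term of the sum is at most `γ / D ^ k` in absolute value, so
`A ≤ |f^{(k)}(ξ)| ≤ (k + 1)! * γ / D ^ k = A / (k + 1) ^ k < A`, a contradiction.
-/

open MeasureTheory

/-- Iterated Rolle theorem: a `C^n` function on `[a, b]` with `n + 1` zeros has an `n`-th
derivative that vanishes somewhere in `[a, b]`. -/
lemma exists_iteratedDerivWithin_eq_zero {a b : ℝ} (hab : a < b) (n : ℕ) (g : ℝ → ℝ)
    (hg : ContDiffOn ℝ n g (Set.Icc a b)) (x : ℕ → ℝ)
    (hx : ∀ i ≤ n, x i ∈ Set.Icc a b) (hlt : ∀ i < n, x i < x (i + 1))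
    (hz : ∀ i ≤ n, g (x i) = 0) :
    ∃ ξ ∈ Set.Icc a b, iteratedDerivWithin n g (Set.Icc a b) ξ = 0 := by
  induction n generalizing g x with
  | zero => exact ⟨x 0, hx 0 le_rfl, by simpa using hz 0 le_rfl⟩
  | succ n ih =>
    have hu := uniqueDiffOn_Icc hab
    have hg' := (contDiffOn_succ_iff_derivWithin (n := (n : WithTop ℕ∞)) hu).1
      (by exact_mod_cast hg)
    have key : ∀ i, ∃ y, i ≤ n →
        y ∈ Set.Ioo (x i) (x (i + 1)) ∧ derivWithin g (Set.Icc a b) y = 0 := by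
      intro i
      by_cases hi : i ≤ n
      · have h1 := hx i (by omega)
        have h2 := hx (i + 1) (by omega)
        obtain ⟨c, hc, hc0⟩ := exists_hasDerivAt_eq_zero (f := g)
          (f' := derivWithin g (Set.Icc a b)) (hlt i (by omega))
          (hg.continuousOn.mono (Set.Icc_subset_Icc h1.1 h2.2))
          (by rw [hz i (by omega), hz (i + 1) (by omega)])
          (fun y hy => (hg'.1 y ⟨h1.1.trans hy.1.le, hy.2.le.trans h2.2⟩).hasDerivWithinAt.hasDerivAt
            (Icc_mem_nhds (h1.1.trans_lt hy.1) (hy.2.trans_le h2.2)))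
        exact ⟨c, fun _ => ⟨hc, hc0⟩⟩
      · exact ⟨0, fun h => absurd h hi⟩
    choose y hy using key
    rw [iteratedDerivWithin_succ']
    refine ih _ hg'.2.2 y (fun i hi => ?_) (fun i hi => ?_) (fun i hi => (hy i hi).2)
    · exact ⟨(hx i (by omega)).1.trans (hy i hi).1.1.le,
        (hy i hi).1.2.le.trans (hx (i + 1) (by omega)).2⟩
    · exact (hy i hi.le).1.2.trans (hy (i + 1) hi).1.1

lemma iteratedDerivWithin_polynomial_eval {s : Set ℝ} (hs : UniqueDiffOn ℝ s) (n : ℕ)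
    (P : Polynomial ℝ) {x : ℝ} (hx : x ∈ s) :
    iteratedDerivWithin n (fun t => P.eval t) s x =
      (Polynomial.derivative^[n] P).eval x := by
  induction n generalizing P x with
  | zero => simp
  | succ n ih =>
    rw [iteratedDerivWithin_succ', Function.iterate_succ_apply, ← ih _ hx]
    exact iteratedDerivWithin_congr
      (fun y hy => by rw [P.derivWithin (hs y hy)]) hx

lemma mul_le_sub_of_gaps {n : ℕ} {x : ℕ → ℝ} {D : ℝ}
    (hgap : ∀ i < n, x i + D ≤ x (i + 1)) {i j : ℕ} (hij : i ≤ j) (hj : j ≤ n) :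
    ((j : ℝ) - i) * D ≤ x j - x i := by
  induction j, hij using Nat.le_induction with
  | base => simp
  | succ j hij ih =>
    have h1 := ih (by omega)
    have h2 := hgap j (by omega)
    push_cast
    linarith

lemma le_abs_sub_of_gaps {n : ℕ} {x : ℕ → ℝ} {D : ℝ} (hD : 0 ≤ D)
    (hgap : ∀ i < n, x i + D ≤ x (i + 1)) {i j : ℕ} (hij : i ≠ j) (hi : i ≤ n) (hj : j ≤ n) :
    D ≤ |x i - x j| := by
  wlog h : i < j generalizing i j
  · rw [abs_sub_comm]
    exact this hij.symm hj hi (by omega)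
  have h1 := mul_le_sub_of_gaps hgap h.le hj
  have h2 : (i : ℝ) + 1 ≤ j := by exact_mod_cast h
  have h3 : D ≤ x j - x i := by nlinarith
  rw [abs_sub_comm]
  exact h3.trans (le_abs_self _)

/-- Mean value theorem for divided differences. -/
lemma exists_iteratedDerivWithin_eq_divided_difference {a b : ℝ} (hab : a < b) (n : ℕ)
    (f : ℝ → ℝ) (hf : ContDiffOn ℝ n f (Set.Icc a b)) (x : ℕ → ℝ)
    (hx : ∀ i ≤ n, x i ∈ Set.Icc a b) (hlt : ∀ i < n, x i < x (i + 1))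
    (hinj : Set.InjOn x (Finset.range (n + 1))) :
    ∃ ξ ∈ Set.Icc a b, iteratedDerivWithin n f (Set.Icc a b) ξ =
      n.factorial * ∑ i ∈ Finset.range (n + 1),
        f (x i) / ∏ j ∈ (Finset.range (n + 1)).erase i, (x i - x j) := by
  have hu := uniqueDiffOn_Icc hab
  set P := Lagrange.interpolate (Finset.range (n + 1)) x (fun i => f (x i)) with hP
  have hPc : ContDiff ℝ n (fun t => P.eval t) := by simpa using P.contDiff_aeval (𝕜 := ℝ) (n : WithTop ℕ∞)
  obtain ⟨ξ, hξ, h0⟩ := exists_iteratedDerivWithin_eq_zero hab n (f - fun t => P.eval t)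
    (hf.sub hPc.contDiffOn) x hx hlt (fun i hi => by
      have := Lagrange.eval_interpolate_at_node (fun i => f (x i)) hinj
        (Finset.mem_range.2 (Nat.lt_succ_of_le hi))
      rw [Pi.sub_apply, hP, this, sub_self])
  refine ⟨ξ, hξ, ?_⟩
  rw [iteratedDerivWithin_sub hξ hu (hf ξ hξ) hPc.contDiffWithinAt, sub_eq_zero,
    iteratedDerivWithin_polynomial_eval hu n P hξ, hP,
    Lagrange.iterate_derivative_interpolate _ hinj (by simp)] at h0
  rw [h0]
  simp [Polynomial.eval_finsetSum]

/-- A compact set of measure more than `n * D` contains `n + 1` points with consecutive gaps at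
least `D`. -/
lemma exists_separated_points {D : ℝ} (hD : 0 ≤ D) (n : ℕ) (E : Set ℝ) (hE : IsCompact E)
    (hvol : ENNReal.ofReal (n * D) < volume E) :
    ∃ x : ℕ → ℝ, (∀ i ≤ n, x i ∈ E) ∧ ∀ i < n, x i + D ≤ x (i + 1) := by
  induction n generalizing E with
  | zero =>
    obtain ⟨y, hy⟩ := nonempty_of_measure_ne_zero (ne_bot_of_gt hvol)
    exact ⟨fun _ => y, fun _ _ => hy, fun i hi => absurd hi (by omega)⟩
  | succ n ih =>
    have hne : E.Nonempty := nonempty_of_measure_ne_zero (ne_bot_of_gt hvol)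
    obtain ⟨m, hm, hmin⟩ := hE.exists_isLeast hne
    have hsub : E ⊆ Set.Icc m (m + D) ∪ (E ∩ Set.Ici (m + D)) := by
      intro y hy
      rcases le_total y (m + D) with h | h
      · exact Or.inl ⟨hmin hy, h⟩
      · exact Or.inr ⟨hy, h⟩
    have hle : volume E ≤ ENNReal.ofReal D + volume (E ∩ Set.Ici (m + D)) := by
      refine (measure_mono hsub).trans ((measure_union_le _ _).trans ?_)
      simp [Real.volume_Icc]
    have hlt : ENNReal.ofReal (n * D) < volume (E ∩ Set.Ici (m + D)) := by
      have h1 := hvol.trans_le hle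
      have h2 : ((n + 1 : ℕ) : ℝ) * D = D + n * D := by push_cast; ring
      rw [h2, ENNReal.ofReal_add hD (by positivity)] at h1
      exact lt_of_add_lt_add_left h1
    obtain ⟨y, hyE, hygap⟩ := ih _ (hE.inter_right isClosed_Ici) hlt
    refine ⟨fun i => Nat.casesOn i m y, ?_, ?_⟩
    · rintro (_ | i) hi
      · exact hm
      · exact (hyE i (by omega)).1
    · rintro (_ | i) hi
      · exact (hyE 0 (by omega)).2
      · exact hygap i (by omega)

/-- Kleinbock–Margulis sublevel-set estimate in one variable. -/
theorem km_sublevel_estimate_one_dim (a b : ℝ) (hab : a < b) (k : ℕ) (hk : 1 ≤ k)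
    (f : ℝ → ℝ) (A : ℝ) (hA : 0 < A)
    (hf : ContDiffOn ℝ k f (Set.Icc a b))
    (hder : ∀ x ∈ Set.Icc a b, A ≤ |iteratedDerivWithin k f (Set.Icc a b) x|)
    (γ : ℝ) (hγ : 0 < γ) :
    volume {x : ℝ | x ∈ Set.Icc a b ∧ |f x| ≤ γ} ≤
      ENNReal.ofReal ((k : ℝ) * ((k : ℝ) + 1) * ((Nat.factorial (k+1) : ℝ)) ^ ((1:ℝ)/(k:ℝ))
        * (γ / A) ^ ((1:ℝ)/(k:ℝ))) := by
  by_contra! hcon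
  have hE : IsCompact {x : ℝ | x ∈ Set.Icc a b ∧ |f x| ≤ γ} :=
    isCompact_Icc.of_isClosed_subset
      (hf.continuousOn.abs.preimage_isClosed_of_isClosed isClosed_Icc isClosed_Iic)
      (fun x hx => hx.1)
  set d : ℝ := ((Nat.factorial (k + 1) : ℝ)) ^ ((1:ℝ)/(k:ℝ)) * (γ / A) ^ ((1:ℝ)/(k:ℝ)) with hd
  have hfac : (0 : ℝ) < (k + 1).factorial := by positivity
  have hd0 : 0 < d := by positivity
  have hdk : d ^ k = (k + 1).factorial * (γ / A) := by
    rw [hd, mul_pow, one_div, Real.rpow_inv_natCast_pow hfac.le (by omega),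
      Real.rpow_inv_natCast_pow (by positivity) (by omega)]
  set D : ℝ := (k + 1) * d with hDdef
  have hD0 : 0 < D := by positivity
  rw [show (k : ℝ) * ((k : ℝ) + 1) * ((Nat.factorial (k+1) : ℝ)) ^ ((1:ℝ)/(k:ℝ))
        * (γ / A) ^ ((1:ℝ)/(k:ℝ)) = k * D by rw [hDdef, hd]; ring] at hcon
  obtain ⟨x, hxE, hgap⟩ := exists_separated_points hD0.le k _ hE hcon
  have hsep : ∀ i ≤ k, ∀ j ≤ k, i ≠ j → D ≤ |x i - x j| := fun i hi j hj hij =>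
    le_abs_sub_of_gaps hD0.le hgap hij hi hj
  have hinj : Set.InjOn x (Finset.range (k + 1)) := by
    intro i hi j hj hij
    by_contra hne
    have hi' : i < k + 1 := by simpa using hi
    have hj' : j < k + 1 := by simpa using hj
    have := hsep i (by omega) j (by omega) hne
    rw [hij, sub_self, abs_zero] at this
    linarith
  obtain ⟨ξ, hξ, hval⟩ := exists_iteratedDerivWithin_eq_divided_difference hab k f hf x
    (fun i hi => (hxE i hi).1) (fun i hi => by linarith [hgap i hi]) hinj
  have hterm : ∀ i ∈ Finset.range (k + 1),
      |f (x i) / ∏ j ∈ (Finset.range (k + 1)).erase i, (x i - x j)| ≤ γ / D ^ k := by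
    intro i hi
    have hi' : i < k + 1 := Finset.mem_range.1 hi
    rw [abs_div, Finset.abs_prod]
    refine div_le_div₀ hγ.le (hxE i (by omega)).2 (by positivity) ?_
    have hcard : ((Finset.range (k + 1)).erase i).card = k := by
      rw [Finset.card_erase_of_mem hi, Finset.card_range]; rfl
    calc D ^ k = ∏ _j ∈ (Finset.range (k + 1)).erase i, D := by rw [Finset.prod_const, hcard]
      _ ≤ _ := Finset.prod_le_prod (fun _ _ => hD0.le) (fun j hj => by
          have hj' := Finset.mem_erase.1 hj
          have hj2 := Finset.mem_range.1 hj'.2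
          exact hsep i (by omega) j (by omega) hj'.1.symm)
  have hbound : A ≤ (k + 1).factorial * (γ / D ^ k) := by
    calc A ≤ _ := hder ξ hξ
      _ ≤ k.factorial * ∑ i ∈ Finset.range (k + 1), γ / D ^ k := by
        rw [hval, abs_mul, Nat.abs_cast]
        gcongr
        exact (Finset.abs_sum_le_sum_abs _ _).trans (Finset.sum_le_sum hterm)
      _ = _ := by
        rw [Finset.sum_const, Finset.card_range, Nat.factorial_succ]
        push_cast
        rw [nsmul_eq_mul]
        push_cast
        ring
  have hEq : ((k + 1).factorial : ℝ) * (γ / D ^ k) = A / ((k : ℝ) + 1) ^ k := by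
    rw [hDdef, mul_pow, hdk]
    field_simp
  have hone : (1 : ℝ) < ((k : ℝ) + 1) ^ k :=
    one_lt_pow₀ (by have : (1 : ℝ) ≤ k := by exact_mod_cast hk
                    linarith) (by omega)
  rw [hEq] at hbound
  exact absurd hbound (not_le.2 (div_lt_self hA hone))
end

section
/- Multidimensional sublevel-set estimate via directional derivatives: Fix an integer k ≥ 1, a dimension d ≥ 1, a nonzero vector β ∈ ℝ^d, and a box I = Π_{i=1}^d [a_i, b_i] ⊂ ℝ^d. Let d_β = Σ_{i=1}^d β_i ∂_i denote the directional derivative operator, with iterates d_β^l f = d_β(d_β^{l−1} f). Suppose f : I → ℝ is (k+1) times continuously differentiable, that inf_{x∈I} sup_{1≤l≤k} |d_β^l f(x)| ≥ A for some A with 0 < A < 1, and that ‖f‖_{k+1} := sup_{x∈I} sup_{1≤|γ|≤k+1} |∂^γ f(x)| < ∞, where for a multi-index γ = (γ_1,…,γ_d), |γ| = Σ_i γ_i and ∂^γ = ∂_1^{γ_1}⋯∂_d^{γ_d}. Then for every ε with 0 < ε < A, the d-dimensional Lebesgue measure of {x ∈ I : |f(x)| ≤ ε} is at most C(β,k,d)·(‖f‖_{k+1}·|b−a|₂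 + 1)^d · |a∨b|^{d−1} · A^{−(d+1/k)} · ε^{1/k}, where C(β,k,d) > 0 depends only on β, k, d, |b−a|₂ is the Euclidean norm of b−a, and |a∨b| = Σ_{i=1}^d max(|a_i|,|b_i|). -/
/-!
Restrict `f` to the lines `t ↦ x + t β`. On such a line the successive derivatives are the values
of `d_β^l f`, and each is bounded by a multiple of `B`: expand `d_β^l` into mixed partials and
reorder them using symmetry of second derivatives (`abs_dBetaIter_le`).

On a line, cut the interval inside the box into `O((B |b - a| + 1) / A)` pieces so short that on
each one a single derivative `d_β^l f`, `1 ≤ l ≤ k`, stays at least `A / 2` in absolute value. On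
such a piece the sublevel set has measure `O((ε / A) ^ (1 / k))` by induction on `l`
(`volume_sublevel_le_of_deriv_ge`). Adding up gives `volume_sublevel_line_le`.

Finally, Tonelli's theorem and translation invariance bound the volume of the sublevel set by
`O(N ^ (d - 1))` times the largest slice, where `N = ∑ max |a i| |b i|`
(`volume_mul_le_of_line_le`). This yields the claim with exponents `1` on `B |b - a| + 1` and
`-(1 + 1 / k)` on `A`, which implies the stated ones since `d ≥ 1` and `A < 1`.
-/

open MeasureTheory

noncomputable section

namespace KMMulti

variable {d : ℕ}

/-- Partial derivative within a set, in the `i`-th coordinate direction. -/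
def pderivW (s : Set (Fin d → ℝ)) (i : Fin d) (f : (Fin d → ℝ) → ℝ) : (Fin d → ℝ) → ℝ :=
  fun x => fderivWithin ℝ f s x (Pi.single i 1)

/-- The directional derivative operator `d_β = Σ_i β_i ∂_i` (within a set). -/
def dBeta (β : Fin d → ℝ) (s : Set (Fin d → ℝ)) (f : (Fin d → ℝ) → ℝ) : (Fin d → ℝ) → ℝ :=
  fun x => ∑ i, β i * pderivW s i f x

/-- Iterates `d_β^l` of the directional derivative operator. -/
def dBetaIter (β : Fin d → ℝ) (s : Set (Fin d → ℝ)) :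
    ℕ → ((Fin d → ℝ) → ℝ) → ((Fin d → ℝ) → ℝ)
  | 0, f => f
  | (l+1), f => dBeta β s (dBetaIter β s l f)

/-- The mixed partial derivative `∂^γ = ∂_1^{γ_1} ⋯ ∂_d^{γ_d}` (within a set). -/
def mpartial (s : Set (Fin d → ℝ)) (γ : Fin d → ℕ) (f : (Fin d → ℝ) → ℝ) :
    (Fin d → ℝ) → ℝ :=
  (List.finRange d).foldr (fun i g => (pderivW s i)^[γ i] g) f

end KMMulti

open KMMulti

/-! ### Sublevel estimates on the line -/

theorem abs_sub_ge_of_abs_deriv_ge {J : Set ℝ} (hJ : J.OrdConnected) {g g' : ℝ → ℝ} {A : ℝ}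
    (hg : ∀ t ∈ J, HasDerivWithinAt g (g' t) J t) (hA : ∀ t ∈ J, A ≤ |g' t|)
    {x y : ℝ} (hx : x ∈ J) (hy : y ∈ J) (hxy : x ≤ y) : A * (y - x) ≤ |g y - g x| := by
  rcases hxy.eq_or_lt with rfl | hlt
  · simp
  have hsub : Set.Icc x y ⊆ J := hJ.out hx hy
  obtain ⟨c, hc, hce⟩ := exists_hasDerivAt_eq_slope g g' hlt
    (fun t ht => (hg t (hsub ht)).continuousWithinAt.mono hsub)
    (fun t ht => (hg t (hsub (Set.Ioo_subset_Icc_self ht))).hasDerivAt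
      (Filter.mem_of_superset (Icc_mem_nhds ht.1 ht.2) hsub))
  have h := hA c (hsub (Set.Ioo_subset_Icc_self hc))
  rw [hce, abs_div, abs_of_pos (sub_pos.2 hlt), le_div_iff₀ (sub_pos.2 hlt)] at h
  exact h

/-- If the `l`-th derivative of `G 0` is at least `A` in absolute value on an interval `J`, then
`{|G 0| ≤ ε}` has measure `O(δ)` as soon as `ε < A δ ^ l`. The functions `G i` are the successive
derivatives of `G 0` within `J`. In the induction on `l`, the set where `|G l| < A δ` has diameter
at most `2 δ`; the part of `J` to the left of it and the part to the right are intervals where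
`|G l| ≥ A δ`. -/
theorem volume_sublevel_le_of_deriv_ge (l : ℕ) : ∀ (J : Set ℝ) (G : ℕ → ℝ → ℝ) (A δ ε : ℝ),
    J.OrdConnected → 0 < A → 0 < δ →
    (∀ i < l, ∀ t ∈ J, HasDerivWithinAt (G i) (G (i + 1) t) J t) →
    (∀ t ∈ J, A ≤ |G l t|) → ε < A * δ ^ l →
    volume {t | t ∈ J ∧ |G 0 t| ≤ ε} ≤ ENNReal.ofReal (2 * (2 ^ l - 1) * δ) := by
  induction l with
  | zero =>
    intro J G A δ ε _ _ _ _ hG hε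
    have : {t | t ∈ J ∧ |G 0 t| ≤ ε} = ∅ := by
      ext t
      simp only [Set.mem_ofPred_eq, Set.mem_empty_iff_false, iff_false, not_and, not_le]
      intro ht
      have := hG t ht
      simp at hε
      linarith
    simp [this]
  | succ l ih =>
    intro J G A δ ε hJ hA hδ hder hG hε
    have hε' : ε < A * δ * δ ^ l := by rw [mul_assoc, ← pow_succ']; exact hε
    have hC : (0 : ℝ) ≤ 2 * (2 ^ l - 1) * δ := by
      have : (1 : ℝ) ≤ 2 ^ l := one_le_pow₀ (by norm_num)
      exact mul_nonneg (by linarith) hδ.le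
    have piece : ∀ K : Set ℝ, K.OrdConnected → K ⊆ J → (∀ t ∈ K, A * δ ≤ |G l t|) →
        volume {t | t ∈ K ∧ |G 0 t| ≤ ε} ≤ ENNReal.ofReal (2 * (2 ^ l - 1) * δ) := by
      intro K hK hKJ hKG
      exact ih K G (A * δ) δ ε hK (by positivity) hδ
        (fun i hi t ht => (hder i (by omega) t (hKJ ht)).mono hKJ) hKG hε'
    set Z : Set ℝ := {t | t ∈ J ∧ |G l t| < A * δ} with hZ
    have hdist : ∀ x ∈ Z, ∀ y ∈ Z, y - x ≤ 2 * δ := by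
      intro x hx y hy
      rcases le_total x y with hxy | hxy
      · have h := abs_sub_ge_of_abs_deriv_ge hJ (hder l (by omega)) hG hx.1 hy.1 hxy
        have h2 := abs_sub (G l y) (G l x)
        have := hx.2
        have := hy.2
        have : A * (y - x) ≤ A * (2 * δ) := by linarith
        exact le_of_mul_le_mul_left this hA
      · linarith
    rcases Z.eq_empty_or_nonempty with hZe | ⟨z, hz⟩
    · refine (piece J hJ subset_rfl ?_).trans (ENNReal.ofReal_le_ofReal ?_)
      · intro t ht
        by_contra hlt
        have : t ∈ Z := ⟨ht, not_le.1 hlt⟩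
        simp [hZe] at this
      · rw [pow_succ]
        have : (1 : ℝ) ≤ 2 ^ l := one_le_pow₀ (by norm_num)
        nlinarith
    · have hbb : BddBelow Z := ⟨z - 2 * δ, fun x hx => by linarith [hdist x hx z hz]⟩
      have hba : BddAbove Z := ⟨z + 2 * δ, fun x hx => by linarith [hdist z hz x hx]⟩
      have hlen : sSup Z - sInf Z ≤ 2 * δ := by
        have : sSup Z ≤ sInf Z + 2 * δ := by
          refine csSup_le ⟨z, hz⟩ fun y hy => ?_
          have : y - 2 * δ ≤ sInf Z := le_csInf ⟨z, hz⟩ fun x hx => by linarith [hdist x hx y hy]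
          linarith
        linarith
      have h1 := piece (J ∩ Set.Iio (sInf Z)) (hJ.inter Set.ordConnected_Iio) Set.inter_subset_left
        (fun t ht => by
          by_contra hlt
          exact absurd (csInf_le hbb (show t ∈ Z from ⟨ht.1, not_le.1 hlt⟩)) (not_le.2 ht.2))
      have h2 := piece (J ∩ Set.Ioi (sSup Z)) (hJ.inter Set.ordConnected_Ioi) Set.inter_subset_left
        (fun t ht => by
          by_contra hlt
          exact absurd (le_csSup hba (show t ∈ Z from ⟨ht.1, not_le.1 hlt⟩)) (not_le.2 ht.2))
      have hcov : {t | t ∈ J ∧ |G 0 t| ≤ ε} ⊆ Set.Icc (sInf Z) (sSup Z) ∪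
          ({t | t ∈ J ∩ Set.Iio (sInf Z) ∧ |G 0 t| ≤ ε} ∪
            {t | t ∈ J ∩ Set.Ioi (sSup Z) ∧ |G 0 t| ≤ ε}) := by
        rintro t ⟨ht, hte⟩
        rcases lt_or_ge t (sInf Z) with h | h
        · exact Or.inr (Or.inl ⟨⟨ht, h⟩, hte⟩)
        rcases lt_or_ge (sSup Z) t with h' | h'
        · exact Or.inr (Or.inr ⟨⟨ht, h'⟩, hte⟩)
        · exact Or.inl ⟨h, h'⟩
      calc volume {t | t ∈ J ∧ |G 0 t| ≤ ε}
          ≤ volume (Set.Icc (sInf Z) (sSup Z)) +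
            (volume {t | t ∈ J ∩ Set.Iio (sInf Z) ∧ |G 0 t| ≤ ε} +
              volume {t | t ∈ J ∩ Set.Ioi (sSup Z) ∧ |G 0 t| ≤ ε}) :=
            (measure_mono hcov).trans ((measure_union_le _ _).trans
              (add_le_add le_rfl (measure_union_le _ _)))
        _ ≤ ENNReal.ofReal (2 * δ) + (ENNReal.ofReal (2 * (2 ^ l - 1) * δ) +
              ENNReal.ofReal (2 * (2 ^ l - 1) * δ)) := by
            gcongr
            rw [Real.volume_Icc]
            exact ENNReal.ofReal_le_ofReal hlen
        _ = ENNReal.ofReal (2 * (2 ^ (l + 1) - 1) * δ) := by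
            rw [← ENNReal.ofReal_add hC hC, ← ENNReal.ofReal_add (by positivity) (by linarith)]
            congr 1
            ring

/-- The one-dimensional sublevel estimate on an interval `J` of length at most `L`, when at every
point one of the derivatives `G 1, …, G k` of `G 0` is at least `A` in absolute value. -/
theorem volume_sublevel_line_le {k : ℕ} (hk : 1 ≤ k) {J : Set ℝ} (hJ : J.OrdConnected)
    {L : ℝ} (hL0 : 0 ≤ L) (hL : ∀ t ∈ J, ∀ u ∈ J, t - u ≤ L) (G : ℕ → ℝ → ℝ) {A M ε : ℝ}
    (hA : 0 < A) (hA1 : A < 1) (hε : 0 < ε) (hεA : ε < A) (hM : 0 ≤ M)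
    (hder : ∀ i < k + 1, ∀ t ∈ J, HasDerivWithinAt (G i) (G (i + 1) t) J t)
    (hlow : ∀ t ∈ J, ∃ l, 1 ≤ l ∧ l ≤ k ∧ A ≤ |G l t|)
    (hup : ∀ l, 1 ≤ l → l ≤ k + 1 → ∀ t ∈ J, |G l t| ≤ M) :
    volume {t | t ∈ J ∧ |G 0 t| ≤ ε} ≤
      ENNReal.ofReal (32 * 2 ^ k * (M * L + 1) * A⁻¹ * (ε / A) ^ ((1 : ℝ) / k)) := by
  set r : ℝ := (ε / A) ^ ((1 : ℝ) / k) with hr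
  have hr0 : 0 < r := Real.rpow_pos_of_pos (by positivity) _
  have hr1 : r ≤ 1 := Real.rpow_le_one (by positivity) ((div_le_one hA).2 hεA.le) (by positivity)
  have hrk : A * r ^ k = ε := by
    rw [hr, ← Real.rpow_natCast, ← Real.rpow_mul (by positivity), one_div_mul_cancel (by positivity),
      Real.rpow_one]
    field_simp
  rcases J.eq_empty_or_nonempty with rfl | hne
  · simp
  have hbb : BddBelow J := by
    obtain ⟨z, hz⟩ := hne
    exact ⟨z - L, fun x hx => by linarith [hL z hz x hx]⟩
  set p := sInf J with hp
  have hJp : ∀ t ∈ J, p ≤ t ∧ t ≤ p + L := fun t ht =>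
    ⟨csInf_le hbb ht, by
      have : t - L ≤ p := le_csInf hne fun u hu => by linarith [hL t ht u hu]
      linarith⟩
  -- Cut `J` into `n` pieces of width `h`, short enough that no `G l` moves by more than `A / 2`.
  set n : ℕ := ⌊2 * M * L / A⌋₊ + 1 with hn
  have hn0 : (0 : ℝ) < n := by rw [hn]; positivity
  have hnle : (n : ℝ) ≤ 2 * (M * L + 1) * A⁻¹ := by
    have h1 := Nat.floor_le (show 0 ≤ 2 * M * L / A by positivity)
    have h2 : 1 ≤ A⁻¹ := (one_le_inv₀ hA).2 hA1.le
    rw [hn]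
    push_cast
    rw [div_eq_mul_inv] at *
    nlinarith
  have hnge : 2 * M * L / A ≤ n := by
    rw [hn]; push_cast; exact (Nat.lt_floor_add_one _).le
  set h : ℝ := L / n with hh
  have hh0 : 0 ≤ h := by positivity
  have hMh : M * h ≤ A / 2 := by
    rw [div_le_iff₀ hA] at hnge
    rw [hh, ← mul_div_assoc, div_le_iff₀ hn0]
    linarith
  have hcov : {t | t ∈ J ∧ |G 0 t| ≤ ε} ⊆ ⋃ j ∈ Finset.range (n + 1),
      {t | t ∈ J ∩ Set.Icc (p + j * h) (p + (j + 1) * h) ∧ |G 0 t| ≤ ε} := by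
    rintro t ⟨ht, hte⟩
    obtain ⟨h1, h2⟩ := hJp t ht
    simp only [Set.mem_iUnion, Finset.mem_range]
    rcases hh0.eq_or_lt with h0 | hpos
    · have hL' : L = 0 := by
        rw [hh, eq_comm, div_eq_zero_iff] at h0
        exact h0.resolve_right hn0.ne'
      refine ⟨0, by omega, ⟨ht, ?_⟩, hte⟩
      rw [← h0]
      constructor <;> linarith
    · refine ⟨⌊(t - p) / h⌋₊, ?_, ⟨ht, ?_, ?_⟩, hte⟩
      · have hnh : n * h = L := by rw [hh]; field_simp
        have : (t - p) / h ≤ n := by rw [div_le_iff₀ hpos, hnh]; linarith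
        have := Nat.floor_le_of_le this
        omega
      · have := Nat.floor_le (show 0 ≤ (t - p) / h from div_nonneg (by linarith) hh0)
        rw [le_div_iff₀ hpos] at this
        linarith
      · have := Nat.lt_floor_add_one ((t - p) / h)
        rw [div_lt_iff₀ hpos] at this
        linarith
  have hpiece : ∀ j : ℕ, volume {t | t ∈ J ∩ Set.Icc (p + j * h) (p + (j + 1) * h) ∧ |G 0 t| ≤ ε} ≤
      ENNReal.ofReal (2 * 2 ^ k * (4 * r)) := by
    intro j
    set K := J ∩ Set.Icc (p + j * h) (p + (j + 1) * h) with hK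
    have hKJ : K ⊆ J := Set.inter_subset_left
    have hKo : K.OrdConnected := hJ.inter Set.ordConnected_Icc
    rcases K.eq_empty_or_nonempty with hKe | ⟨t₀, ht₀⟩
    · simp [hKe]
    obtain ⟨l, hl1, hlk, hl⟩ := hlow t₀ (hKJ ht₀)
    -- `4 * r` makes `(A / 2) * (4 * r) ^ l ≥ 2 * A * r ^ k = 2 * ε` for every `1 ≤ l ≤ k`.
    refine (volume_sublevel_le_of_deriv_ge l K G (A / 2) (4 * r) ε hKo (by positivity)
      (by positivity) (fun i hi t ht => (hder i (by omega) t (hKJ ht)).mono hKJ) ?_ ?_).trans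
      (ENNReal.ofReal_le_ofReal ?_)
    · intro t ht
      have hv := Convex.norm_image_sub_le_of_norm_hasDerivWithin_le (f := G l) (f' := G (l + 1))
        (s := K) (C := M) (fun x hx => (hder l (by omega) x (hKJ hx)).mono hKJ)
        (fun x hx => hup (l + 1) (by omega) (by omega) x (hKJ hx)) hKo.convex ht ht₀
      have hd : ‖t₀ - t‖ ≤ h := by
        rw [Real.norm_eq_abs, abs_le]
        have := ht.2.1
        have := ht.2.2
        have := ht₀.2.1
        have := ht₀.2.2
        constructor <;> linarith
      have h3 := abs_sub_abs_le_abs_sub (G l t₀) (G l t)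
      rw [Real.norm_eq_abs] at hv
      have h4 := mul_le_mul_of_nonneg_left hd hM
      linarith
    · have h1 : r ^ k ≤ r ^ l := pow_le_pow_of_le_one hr0.le hr1 hlk
      have h2 : (4 : ℝ) ≤ 4 ^ l := by
        calc (4 : ℝ) = 4 ^ 1 := by norm_num
          _ ≤ 4 ^ l := pow_le_pow_right₀ (by norm_num) hl1
      have h3 : 4 * r ^ k ≤ 4 ^ l * r ^ l := mul_le_mul h2 h1 (by positivity) (by positivity)
      rw [mul_pow]
      nlinarith
    · have h1 : (2 : ℝ) ^ l ≤ 2 ^ k := pow_le_pow_right₀ (by norm_num) hlk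
      gcongr
      linarith
  calc volume {t | t ∈ J ∧ |G 0 t| ≤ ε}
      ≤ ∑ j ∈ Finset.range (n + 1),
        volume {t | t ∈ J ∩ Set.Icc (p + j * h) (p + (j + 1) * h) ∧ |G 0 t| ≤ ε} :=
        (measure_mono hcov).trans (measure_biUnion_finset_le _ _)
    _ ≤ ∑ j ∈ Finset.range (n + 1), ENNReal.ofReal (2 * 2 ^ k * (4 * r)) :=
        Finset.sum_le_sum fun j _ => hpiece j
    _ = ENNReal.ofReal ((n + 1 : ℕ) * (2 * 2 ^ k * (4 * r))) := by
        rw [Finset.sum_const, Finset.card_range, nsmul_eq_mul,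
          ENNReal.ofReal_mul (p := ((n + 1 : ℕ) : ℝ)) (by positivity),
          ENNReal.ofReal_natCast]
    _ ≤ _ := by
        apply ENNReal.ofReal_le_ofReal
        have h1 : ((n + 1 : ℕ) : ℝ) ≤ 4 * (M * L + 1) * A⁻¹ := by
          have : (1 : ℝ) ≤ n := by rw [hn]; push_cast; linarith [Nat.cast_nonneg (α := ℝ) ⌊2 * M * L / A⌋₊]
          push_cast
          linarith
        calc ((n + 1 : ℕ) : ℝ) * (2 * 2 ^ k * (4 * r))
            ≤ (4 * (M * L + 1) * A⁻¹) * (2 * 2 ^ k * (4 * r)) := by gcongr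
          _ = 32 * 2 ^ k * (M * L + 1) * A⁻¹ * r := by ring
          _ ≤ _ := le_rfl

/-! ### Iterated derivatives along `β` and mixed partials -/

namespace KMMulti

theorem dBeta_eq {d : ℕ} (β : Fin d → ℝ) (s : Set (Fin d → ℝ)) (f : (Fin d → ℝ) → ℝ)
    (x : Fin d → ℝ) : dBeta β s f x = fderivWithin ℝ f s x β := by
  have hβ : β = ∑ i, β i • (Pi.single i 1 : Fin d → ℝ) := by
    simpa using (pi_eq_sum_univ' β)
  conv_rhs => rw [hβ]
  simp [dBeta, pderivW, map_sum]

theorem pderivW_congr {d : ℕ} {s : Set (Fin d → ℝ)} {f g : (Fin d → ℝ) → ℝ} (h : Set.EqOn f g s)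
    (i : Fin d) : Set.EqOn (pderivW s i f) (pderivW s i g) s := fun x hx => by
  simp only [pderivW, fderivWithin_congr h (h hx)]

theorem contDiffOn_pderivW {d : ℕ} {s : Set (Fin d → ℝ)} (hs : UniqueDiffOn ℝ s) {n : ℕ}
    {f : (Fin d → ℝ) → ℝ} (hf : ContDiffOn ℝ ((n + 1 : ℕ) : WithTop ℕ∞) f s) (i : Fin d) :
    ContDiffOn ℝ (n : WithTop ℕ∞) (pderivW s i f) s :=
  (hf.fderivWithin hs (by push_cast; exact le_rfl)).clm_apply contDiffOn_const

theorem pderivW_comm {d : ℕ} {s : Set (Fin d → ℝ)} (hs : UniqueDiffOn ℝ s)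
    (hcl : s ⊆ closure (interior s)) {n : ℕ}
    {f : (Fin d → ℝ) → ℝ} (hf : ContDiffOn ℝ ((n + 2 : ℕ) : WithTop ℕ∞) f s) (i j : Fin d) :
    Set.EqOn (pderivW s i (pderivW s j f)) (pderivW s j (pderivW s i f)) s := by
  intro x hx
  have hsymm : IsSymmSndFDerivWithinAt ℝ f s x :=
    (hf x hx).isSymmSndFDerivWithinAt (by
      rw [minSmoothness_of_isRCLikeNormedField]
      exact_mod_cast (show 2 ≤ n + 2 by omega)) hs (hcl hx) hx
  have hdiff : DifferentiableWithinAt ℝ (fderivWithin ℝ f s) s x :=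
    (hf.fderivWithin (m := 1) hs (by exact_mod_cast (show 1 + 1 ≤ n + 2 by omega))).differentiableOn
      (by simp) x hx
  have key : ∀ i j : Fin d, pderivW s i (pderivW s j f) x =
      fderivWithin ℝ (fderivWithin ℝ f s) s x (Pi.single i 1) (Pi.single j 1) := by
    intro i j
    have := fderivWithin_clm_apply (hs x hx) hdiff
      (differentiableWithinAt_const (Pi.single j (1 : ℝ) : Fin d → ℝ))
    change fderivWithin ℝ (fun y => fderivWithin ℝ f s y (Pi.single j 1)) s x (Pi.single i 1) = _
    rw [this]
    simp
  rw [key, key, hsymm]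

/-- Partial derivative along a word of coordinate directions; the head of the word acts last. -/
def wordDeriv {d : ℕ} (s : Set (Fin d → ℝ)) (w : List (Fin d)) (f : (Fin d → ℝ) → ℝ) :
    (Fin d → ℝ) → ℝ :=
  w.foldr (pderivW s) f

theorem contDiffOn_wordDeriv {d : ℕ} {s : Set (Fin d → ℝ)} (hs : UniqueDiffOn ℝ s)
    {f : (Fin d → ℝ) → ℝ} (w : List (Fin d)) : ∀ n : ℕ,
    ContDiffOn ℝ ((n + w.length : ℕ) : WithTop ℕ∞) f s →
    ContDiffOn ℝ (n : WithTop ℕ∞) (wordDeriv s w f) s := by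
  induction w with
  | nil => intro n hf; simpa [wordDeriv] using hf
  | cons i w ih =>
    intro n hf
    refine contDiffOn_pderivW hs (ih (n + 1) ?_) i
    rw [List.length_cons] at hf
    rwa [show n + 1 + w.length = n + (w.length + 1) by ring]

theorem wordDeriv_perm {d : ℕ} {s : Set (Fin d → ℝ)} (hs : UniqueDiffOn ℝ s)
    (hcl : s ⊆ closure (interior s)) {f : (Fin d → ℝ) → ℝ} {n : ℕ}
    (hf : ContDiffOn ℝ (n : WithTop ℕ∞) f s) {w w' : List (Fin d)} (hw : w.Perm w')
    (hn : w.length ≤ n) : Set.EqOn (wordDeriv s w f) (wordDeriv s w' f) s := by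
  induction hw with
  | nil => exact fun _ _ => rfl
  | cons i _ ih => exact pderivW_congr (ih (by simp at hn; omega)) i
  | swap i j w =>
    simp only [List.length_cons] at hn
    exact pderivW_comm (n := 0) hs hcl (contDiffOn_wordDeriv hs w 2
      (hf.of_le (by exact_mod_cast (show 2 + w.length ≤ n by omega)))) j i
  | trans h1 _ ih1 ih2 => exact (ih1 hn).trans (ih2 (h1.length_eq ▸ hn))

theorem mpartial_eq_wordDeriv {d : ℕ} (s : Set (Fin d → ℝ)) (γ : Fin d → ℕ)
    (f : (Fin d → ℝ) → ℝ) : mpartial s γ f =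
      wordDeriv s ((List.finRange d).flatMap fun i => List.replicate (γ i) i) f := by
  have hrep : ∀ (i : Fin d) (m : ℕ) (g : (Fin d → ℝ) → ℝ),
      (List.replicate m i).foldr (pderivW s) g = (pderivW s i)^[m] g := by
    intro i m g
    induction m with
    | zero => rfl
    | succ m ih => rw [List.replicate_succ, List.foldr_cons, ih, Function.iterate_succ_apply']
  unfold mpartial wordDeriv
  induction List.finRange d with
  | nil => rfl
  | cons i L ih => rw [List.foldr_cons, List.flatMap_cons, List.foldr_append, hrep, ih]

theorem perm_flatMap_count {d : ℕ} (w : List (Fin d)) :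
    w.Perm ((List.finRange d).flatMap fun i => List.replicate (w.count i) i) := by
  rw [List.perm_iff_count]
  intro a
  rw [List.count_flatMap, ← Fin.sum_univ_def]
  simp [List.count_replicate]

/-- The bound on the ordered mixed partials `∂^γ` passes to every order of differentiation, by
symmetry of second derivatives. -/
theorem abs_wordDeriv_le {d : ℕ} {s : Set (Fin d → ℝ)} (hs : UniqueDiffOn ℝ s)
    (hcl : s ⊆ closure (interior s)) {f : (Fin d → ℝ) → ℝ} {n : ℕ} {B : ℝ}
    (hf : ContDiffOn ℝ (n : WithTop ℕ∞) f s)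
    (hB : ∀ x ∈ s, ∀ γ : Fin d → ℕ, 1 ≤ ∑ i, γ i → ∑ i, γ i ≤ n → |mpartial s γ f x| ≤ B)
    (w : List (Fin d)) (hw1 : 1 ≤ w.length) (hwn : w.length ≤ n) {x : Fin d → ℝ} (hx : x ∈ s) :
    |wordDeriv s w f x| ≤ B := by
  have hlen : ∑ i, w.count i = w.length := by
    rw [(perm_flatMap_count w).length_eq, List.length_flatMap, Fin.sum_univ_def]
    simp
  rw [wordDeriv_perm hs hcl hf (perm_flatMap_count w) hwn hx, ← mpartial_eq_wordDeriv]
  exact hB x hx _ (hlen ▸ hw1) (hlen ▸ hwn)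

/-- `d_β^l f` is a linear combination of word derivatives of length `l` whose coefficients have
absolute values summing to `(∑ |β i|) ^ l`. -/
theorem dBetaIter_eq_sum {d : ℕ} (β : Fin d → ℝ) {s : Set (Fin d → ℝ)} (hs : UniqueDiffOn ℝ s)
    {f : (Fin d → ℝ) → ℝ} {n : ℕ} (hf : ContDiffOn ℝ (n : WithTop ℕ∞) f s) (l : ℕ) (hl : l ≤ n) :
    ∃ (ι : Type) (_ : Fintype ι) (c : ι → ℝ) (w : ι → List (Fin d)),
      (∀ j, (w j).length = l) ∧ ∑ j, |c j| = (∑ i, |β i|) ^ l ∧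
      Set.EqOn (dBetaIter β s l f) (fun x => ∑ j, c j * wordDeriv s (w j) f x) s := by
  induction l with
  | zero => exact ⟨Unit, inferInstance, fun _ => 1, fun _ => [], by simp, by simp,
      fun x _ => by simp [dBetaIter, wordDeriv]⟩
  | succ l ih =>
    obtain ⟨ι, _, c, w, hw, hc, heq⟩ := ih (by omega)
    refine ⟨Fin d × ι, inferInstance, fun p => β p.1 * c p.2, fun p => p.1 :: w p.2,
      by simp [hw], ?_, ?_⟩
    · rw [pow_succ', ← hc, Finset.sum_mul_sum, Fintype.sum_prod_type]
      simp [abs_mul]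
    · intro x hx
      simp only [dBetaIter, dBeta]
      rw [Fintype.sum_prod_type]
      refine Finset.sum_congr rfl fun i _ => ?_
      rw [pderivW_congr heq i hx]
      have hd : ∀ j, DifferentiableWithinAt ℝ (wordDeriv s (w j) f) s x := fun j =>
        (contDiffOn_wordDeriv hs (w j) 1 (hf.of_le (by
          rw [hw]; exact_mod_cast (show 1 + l ≤ n by omega)))).differentiableOn (by simp) x hx
      simp only [pderivW]
      rw [fderivWithin_fun_sum (hs x hx) fun j _ => (hd j).const_mul (c j)]
      rw [sum_apply, Finset.mul_sum]
      refine Finset.sum_congr rfl fun j _ => ?_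
      rw [fderivWithin_const_mul (hs x hx) (hd j)]
      simp [wordDeriv, pderivW, mul_assoc]

theorem abs_dBetaIter_le {d : ℕ} (β : Fin d → ℝ) {s : Set (Fin d → ℝ)} (hs : UniqueDiffOn ℝ s)
    (hcl : s ⊆ closure (interior s)) {f : (Fin d → ℝ) → ℝ} {n : ℕ} {B : ℝ}
    (hf : ContDiffOn ℝ (n : WithTop ℕ∞) f s)
    (hB : ∀ x ∈ s, ∀ γ : Fin d → ℕ, 1 ≤ ∑ i, γ i → ∑ i, γ i ≤ n → |mpartial s γ f x| ≤ B)
    (l : ℕ) (hl1 : 1 ≤ l) (hl : l ≤ n) {x : Fin d → ℝ} (hx : x ∈ s) :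
    |dBetaIter β s l f x| ≤ (∑ i, |β i|) ^ l * B := by
  obtain ⟨ι, _, c, w, hw, hc, heq⟩ := dBetaIter_eq_sum β hs hf l hl
  rw [heq hx, ← hc, Finset.sum_mul]
  refine (Finset.abs_sum_le_sum_abs _ _).trans (Finset.sum_le_sum fun j _ => ?_)
  rw [abs_mul]
  exact mul_le_mul_of_nonneg_left (abs_wordDeriv_le hs hcl hf hB (w j) (by rw [hw]; exact hl1)
    (by rw [hw]; exact hl) hx) (abs_nonneg _)

theorem contDiffOn_dBetaIter {d : ℕ} (β : Fin d → ℝ) {s : Set (Fin d → ℝ)} (hs : UniqueDiffOn ℝ s)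
    {f : (Fin d → ℝ) → ℝ} (l : ℕ) : ∀ n : ℕ,
    ContDiffOn ℝ ((n + l : ℕ) : WithTop ℕ∞) f s →
    ContDiffOn ℝ (n : WithTop ℕ∞) (dBetaIter β s l f) s := by
  induction l with
  | zero => intro n hf; simpa [dBetaIter] using hf
  | succ l ih =>
    intro n hf
    have := ih (n + 1) (by rwa [show n + 1 + l = n + (l + 1) by ring])
    have h := ContDiffOn.sum (s := Finset.univ) (t := s) (n := (n : WithTop ℕ∞))
      fun (i : Fin d) _ => (contDiffOn_const (c := β i)).mul (contDiffOn_pderivW hs this i)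
    exact h

theorem hasDerivWithinAt_dBetaIter_line {d : ℕ} (β : Fin d → ℝ) {s : Set (Fin d → ℝ)}
    (hs : UniqueDiffOn ℝ s) {f : (Fin d → ℝ) → ℝ} {n : ℕ}
    (hf : ContDiffOn ℝ (n : WithTop ℕ∞) f s) (x : Fin d → ℝ) (l : ℕ) (hl : l < n) {t : ℝ}
    (ht : x + t • β ∈ s) :
    HasDerivWithinAt (fun u : ℝ => dBetaIter β s l f (x + u • β))
      (dBetaIter β s (l + 1) f (x + t • β)) {u | x + u • β ∈ s} t := by
  have hd : DifferentiableWithinAt ℝ (dBetaIter β s l f) s (x + t • β) :=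
    (contDiffOn_dBetaIter β hs l 1 (hf.of_le (by
      exact_mod_cast (show 1 + l ≤ n by omega)))).differentiableOn (by simp) _ ht
  have hline : HasDerivWithinAt (fun u : ℝ => x + u • β) β {u | x + u • β ∈ s} t := by
    simpa using (((hasDerivAt_id t).smul_const β).const_add x).hasDerivWithinAt
  have := hd.hasFDerivWithinAt.comp_hasDerivWithinAt t hline (fun u hu => hu)
  rw [← dBeta_eq] at this
  exact this

end KMMulti

/-! ### Slicing by parallel lines -/

/-- Slicing along lines of direction `β`: integrate the indicator of `x + t β ∈ S` over `|t| ≤ N`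
and over a ball of `x` large enough to contain every translate `S - t β`. Integrating first in `x`
gives `2 N * volume S`; integrating first in `t` brings in the one-dimensional slices. -/
theorem volume_mul_le_of_line_le {d : ℕ} (β : Fin d → ℝ) {S : Set (Fin d → ℝ)}
    (hS : MeasurableSet S) {N : ℝ} (hN : 0 ≤ N) (hSN : ∀ x ∈ S, ‖x‖ ≤ N) {m : ENNReal}
    (hm : ∀ x, volume {t : ℝ | x + t • β ∈ S} ≤ m) :
    volume S * ENNReal.ofReal (2 * N) ≤
      ENNReal.ofReal ((2 * (N * (1 + ‖β‖))) ^ d) * m := by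
  set Q : Set (Fin d → ℝ) := Metric.closedBall 0 (N * (1 + ‖β‖)) with hQ
  have hcont : Measurable fun p : ℝ × (Fin d → ℝ) => p.2 + p.1 • β := by fun_prop
  have hmeas : Measurable (Function.uncurry fun (t : ℝ) (x : Fin d → ℝ) =>
      S.indicator (fun _ => (1 : ENNReal)) (x + t • β)) :=
    (measurable_const.indicator hS).comp hcont
  have hswap := lintegral_lintegral_swap (μ := volume.restrict (Set.Icc (-N) N))
    (ν := volume.restrict Q) hmeas.aemeasurable
  have hleft : ∀ t ∈ Set.Icc (-N) N,
      ∫⁻ x in Q, S.indicator (fun _ => (1 : ENNReal)) (x + t • β) = volume S := by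
    intro t ht
    have hSt : MeasurableSet ((fun x : Fin d → ℝ => x + t • β) ⁻¹' S) :=
      hS.preimage (measurable_id.add_const _)
    have hsub : (fun x : Fin d → ℝ => x + t • β) ⁻¹' S ⊆ Q := by
      intro x hx
      rw [hQ, mem_closedBall_zero_iff]
      have h1 := hSN _ hx
      have h2 : ‖x‖ ≤ ‖x + t • β‖ + ‖t • β‖ := by
        simpa using norm_sub_le (x + t • β) (t • β)
      have h3 : ‖t • β‖ ≤ N * ‖β‖ := by
        rw [norm_smul]
        exact mul_le_mul_of_nonneg_right (abs_le.2 ht) (norm_nonneg _)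
      linarith
    have : (fun x : Fin d → ℝ => S.indicator (fun _ => (1 : ENNReal)) (x + t • β)) =
        ((fun x : Fin d → ℝ => x + t • β) ⁻¹' S).indicator 1 := rfl
    rw [this, lintegral_indicator_one hSt, Measure.restrict_apply hSt,
      Set.inter_eq_left.2 hsub, measure_preimage_add_right]
  have hright : ∀ x : Fin d → ℝ,
      ∫⁻ t in Set.Icc (-N) N, S.indicator (fun _ => (1 : ENNReal)) (x + t • β) ≤ m := by
    intro x
    have hSt : MeasurableSet {t : ℝ | x + t • β ∈ S} :=
      hS.preimage (show Measurable fun t : ℝ => x + t • β by fun_prop)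
    have : (fun t : ℝ => S.indicator (fun _ => (1 : ENNReal)) (x + t • β)) =
        {t : ℝ | x + t • β ∈ S}.indicator 1 := rfl
    rw [this, lintegral_indicator_one hSt]
    exact (Measure.restrict_apply_le _ _).trans (hm x)
  calc volume S * ENNReal.ofReal (2 * N)
      = ∫⁻ t in Set.Icc (-N) N, volume S := by
        rw [setLIntegral_const, Real.volume_Icc]; congr 2; ring
    _ = ∫⁻ t in Set.Icc (-N) N, ∫⁻ x in Q, S.indicator (fun _ => (1 : ENNReal)) (x + t • β) :=
        setLIntegral_congr_fun measurableSet_Icc fun t ht => (hleft t ht).symm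
    _ = ∫⁻ x in Q, ∫⁻ t in Set.Icc (-N) N, S.indicator (fun _ => (1 : ENNReal)) (x + t • β) :=
        hswap
    _ ≤ ∫⁻ x in Q, m := lintegral_mono hright
    _ = _ := by
        rw [setLIntegral_const, hQ, Real.volume_pi_closedBall _ (by positivity), Fintype.card_fin,
          mul_comm]

/-! ### The multidimensional estimate -/

/-- Multidimensional sublevel-set estimate via directional derivatives. -/
theorem km_sublevel_estimate_multi_dim (d k : ℕ) (hd : 1 ≤ d) (hk : 1 ≤ k)
    (β : Fin d → ℝ) (hβ : β ≠ 0) :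
    ∃ C > (0 : ℝ), ∀ (a b : Fin d → ℝ), a ≤ b → ∀ f : (Fin d → ℝ) → ℝ, ∀ A B ε : ℝ,
      0 < A → A < 1 → 0 < ε → ε < A → 0 ≤ B →
      ContDiffOn ℝ (k+1) f (Set.Icc a b) →
      (∀ x ∈ Set.Icc a b, ∃ l : ℕ, 1 ≤ l ∧ l ≤ k ∧
        A ≤ |dBetaIter β (Set.Icc a b) l f x|) →
      (∀ x ∈ Set.Icc a b, ∀ γ : Fin d → ℕ, 1 ≤ ∑ i, γ i → ∑ i, γ i ≤ k + 1 →
        |mpartial (Set.Icc a b) γ f x| ≤ B) →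
      volume {x : Fin d → ℝ | x ∈ Set.Icc a b ∧ |f x| ≤ ε} ≤
        ENNReal.ofReal (C * (B * Real.sqrt (∑ i, (b i - a i)^2) + 1) ^ d *
          (∑ i, max |a i| |b i|) ^ (d - 1) *
          A ^ (-((d : ℝ) + 1/(k : ℝ))) * ε ^ ((1:ℝ)/(k:ℝ))) := by
  obtain ⟨i₀, hi₀⟩ : ∃ i, β i ≠ 0 := Function.ne_iff.1 hβ
  have hb0 : 0 < |β i₀| := abs_pos.2 hi₀
  set K : ℝ := ∑ i, |β i| with hK
  have hK0 : 0 ≤ K := Finset.sum_nonneg fun i _ => abs_nonneg _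
  set c : ℝ := (1 + K) ^ (k + 1) / |β i₀| + 1 with hc
  have hc0 : 0 < c := by positivity
  refine ⟨(2 * (1 + ‖β‖)) ^ d * (32 * 2 ^ k) * c, by positivity, ?_⟩
  intro a b hab f A B ε hA hA1 hε hεA hB hf hlow hup
  -- A degenerate box is null, and the derivatives within it carry no information.
  by_cases hlt : ∀ i, a i < b i
  swap
  · push Not at hlt
    obtain ⟨i, hi⟩ := hlt
    have h0 : volume (Set.Icc a b) = 0 := by
      rw [Real.volume_Icc_pi]
      exact Finset.prod_eq_zero (Finset.mem_univ i) (ENNReal.ofReal_eq_zero.2 (by linarith))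
    rw [measure_mono_null (fun x hx => hx.1) h0]
    exact bot_le
  set s := Set.Icc a b with hsdef
  have hint : (interior s).Nonempty := by
    rw [hsdef, ← Set.pi_univ_Icc, interior_pi_set Set.finite_univ]
    refine ⟨fun i => (a i + b i) / 2, fun i _ => ?_⟩
    change (a i + b i) / 2 ∈ interior (Set.Icc (a i) (b i))
    rw [interior_Icc]
    have := hlt i
    constructor <;> linarith
  have hs : UniqueDiffOn ℝ s := uniqueDiffOn_convex (convex_Icc a b) hint
  have hcl : s ⊆ closure (interior s) := by
    rw [(convex_Icc (𝕜 := ℝ) a b).closure_interior_eq_closure_of_nonempty_interior hint]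
    exact subset_closure
  have hf' : ContDiffOn ℝ ((k + 1 : ℕ) : WithTop ℕ∞) f s := by exact_mod_cast hf
  set D : ℝ := Real.sqrt (∑ i, (b i - a i) ^ 2) with hD
  have hD0 : 0 ≤ D := Real.sqrt_nonneg _
  have hDi : b i₀ - a i₀ ≤ D := by
    apply Real.le_sqrt_of_sq_le
    exact Finset.single_le_sum (f := fun i => (b i - a i) ^ 2) (fun i _ => sq_nonneg _)
      (Finset.mem_univ i₀)
  set N : ℝ := ∑ i, max |a i| |b i| with hN
  have hNi : ∀ i, max |a i| |b i| ≤ N := fun i =>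
    Finset.single_le_sum (f := fun i => max |a i| |b i|)
      (fun i _ => (abs_nonneg _).trans (le_max_left _ _)) (Finset.mem_univ i)
  have hN0 : 0 < N := by
    refine lt_of_lt_of_le ?_ (hNi i₀)
    have := hlt i₀
    by_contra hle
    have h1 := abs_le.1 ((le_max_left _ _).trans (not_lt.1 hle))
    have h2 := abs_le.1 ((le_max_right _ _).trans (not_lt.1 hle))
    linarith [h1.1, h1.2, h2.1, h2.2]
  set S : Set (Fin d → ℝ) := {x | x ∈ s ∧ |f x| ≤ ε} with hS
  have hSm : MeasurableSet S := by
    have : IsClosed (s ∩ f ⁻¹' (Set.Icc (-ε) ε)) :=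
      hf.continuousOn.preimage_isClosed_of_isClosed isClosed_Icc isClosed_Icc
    convert this.measurableSet using 1
    ext x
    exact and_congr_right fun _ => abs_le
  have hSN : ∀ x ∈ S, ‖x‖ ≤ N := fun x hx => by
    refine (pi_norm_le_iff_of_nonneg hN0.le).2 fun i => ?_
    exact (abs_le_max_abs_abs (hx.1.1 i) (hx.1.2 i)).trans (hNi i)
  set M : ℝ := (1 + K) ^ (k + 1) * B with hM
  have hM0 : 0 ≤ M := by positivity
  set L : ℝ := D / |β i₀| with hL
  have hline : ∀ x : Fin d → ℝ, volume {t : ℝ | x + t • β ∈ S} ≤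
      ENNReal.ofReal (32 * 2 ^ k * (M * L + 1) * A⁻¹ * (ε / A) ^ ((1 : ℝ) / k)) := by
    intro x
    have hconv : Convex ℝ {t : ℝ | x + t • β ∈ s} := by
      intro t ht u hu p q hp hq hpq
      have := convex_Icc a b ht hu hp hq hpq
      have he : p • (x + t • β) + q • (x + u • β) = x + (p • t + q • u) • β := by
        rw [smul_add, smul_add, add_smul, smul_assoc, smul_assoc, add_add_add_comm, ← add_smul,
          hpq, one_smul]
      rw [he] at this
      exact this
    refine volume_sublevel_line_le hk (J := {t : ℝ | x + t • β ∈ s}) hconv.ordConnected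
      (L := L) (by positivity) ?_ (fun l t => dBetaIter β s l f (x + t • β)) hA hA1 hε hεA hM0
      (fun l hl t ht => hasDerivWithinAt_dBetaIter_line β hs hf' x l hl ht)
      (fun t ht => hlow _ ht) ?_
    · intro t ht u hu
      have h1 := ht.1 i₀
      have h2 := ht.2 i₀
      have h3 := hu.1 i₀
      have h4 := hu.2 i₀
      simp only [Pi.add_apply, Pi.smul_apply, smul_eq_mul] at h1 h2 h3 h4
      rw [hL, le_div_iff₀ hb0]
      calc (t - u) * |β i₀| ≤ |t - u| * |β i₀| := by gcongr; exact le_abs_self _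
        _ = |t * β i₀ - u * β i₀| := by rw [← abs_mul, sub_mul]
        _ ≤ b i₀ - a i₀ := abs_le.2 ⟨by linarith, by linarith⟩
        _ ≤ D := hDi
    · intro l hl1 hl t ht
      refine (abs_dBetaIter_le β hs hcl hf' hup l hl1 hl ht).trans ?_
      refine mul_le_mul_of_nonneg_right ?_ hB
      calc K ^ l ≤ (1 + K) ^ l := pow_le_pow_left₀ hK0 (by linarith) l
        _ ≤ (1 + K) ^ (k + 1) := pow_le_pow_right₀ (by linarith) hl
  have hfub := volume_mul_le_of_line_le β hSm hN0.le hSN hline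
  have h2N : ENNReal.ofReal (2 * N) ≠ 0 := (ENNReal.ofReal_pos.2 (by positivity)).ne'
  refine (ENNReal.mul_le_mul_iff_left h2N ENNReal.ofReal_ne_top).1 (hfub.trans ?_)
  rw [← ENNReal.ofReal_mul (by positivity), ← ENNReal.ofReal_mul (by positivity)]
  apply ENNReal.ofReal_le_ofReal
  have e1 : N ^ d = N ^ (d - 1) * N := by rw [← pow_succ, Nat.sub_add_cancel hd]
  have e2 : A⁻¹ * (ε / A) ^ ((1 : ℝ) / k) =
      A ^ (-(1 + 1 / (k : ℝ))) * ε ^ ((1 : ℝ) / k) := by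
    rw [Real.div_rpow hε.le hA.le, neg_add, Real.rpow_add hA, Real.rpow_neg_one,
      Real.rpow_neg hA.le]
    ring
  have e3 : A ^ (-(1 + 1 / (k : ℝ))) ≤ A ^ (-((d : ℝ) + 1 / (k : ℝ))) := by
    apply Real.rpow_le_rpow_of_exponent_ge hA hA1.le
    have : (1 : ℝ) ≤ d := by exact_mod_cast hd
    linarith
  have e4 : M * L + 1 ≤ c * (B * D + 1) ^ d := by
    have h1 : B * D + 1 ≤ (B * D + 1) ^ d :=
      le_self_pow₀ (by linarith [mul_nonneg hB hD0]) (by omega)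
    have h2 : M * L + 1 ≤ c * (B * D + 1) := by
      have h3 : M * L = (1 + K) ^ (k + 1) / |β i₀| * (B * D) := by rw [hM, hL]; ring
      have h4 : 0 ≤ (1 + K) ^ (k + 1) / |β i₀| := by positivity
      have h5 : 0 ≤ B * D := by positivity
      rw [h3, hc]
      linarith
    exact h2.trans (mul_le_mul_of_nonneg_left h1 hc0.le)
  have hε0 : 0 ≤ ε ^ ((1 : ℝ) / k) := by positivity
  calc (2 * (N * (1 + ‖β‖))) ^ d * (32 * 2 ^ k * (M * L + 1) * A⁻¹ * (ε / A) ^ ((1 : ℝ) / k))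
      = (2 * (1 + ‖β‖)) ^ d * (N ^ (d - 1) * N) * (32 * 2 ^ k) *
          (M * L + 1) * (A⁻¹ * (ε / A) ^ ((1 : ℝ) / k)) := by
        rw [← e1, show 2 * (N * (1 + ‖β‖)) = 2 * (1 + ‖β‖) * N by ring, mul_pow _ N]
        ring
    _ ≤ (2 * (1 + ‖β‖)) ^ d * (N ^ (d - 1) * N) * (32 * 2 ^ k) *
          (c * (B * D + 1) ^ d) * (A ^ (-((d : ℝ) + 1 / (k : ℝ))) * ε ^ ((1 : ℝ) / k)) := by
        rw [e2]
        gcongr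
    _ ≤ (2 * (1 + ‖β‖)) ^ d * (N ^ (d - 1) * N) * (32 * 2 ^ k) *
          (c * (B * D + 1) ^ d) * (A ^ (-((d : ℝ) + 1 / (k : ℝ))) * ε ^ ((1 : ℝ) / k)) * 2 :=
        le_mul_of_one_le_right (by positivity) (by norm_num)
    _ = _ := by ring
end
end
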